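/- arXiv:2405.02531 — 3 statements merged into one kernel-verified Lean document; each statement's English description precedes it below -/
import Mathlib

section
/- Fix δ ≥ 0, a symbol a of order 0, the bump β, and an even bump function χ ∈ C_c^∞(ℝ) supported in [−ε, ε] with 0 < ε ≪ 1. For j ≥ 1, r₁, r₂ > 0 define H̃(r₁,r₂;θ) = 2^{−j(3/2+δ)} χ(θ) (r₁+r₂)^{−3/2−δ} β(r₁+r₂) a(2^j(r₁+r₂)) ∫₀^∞ e^{i 2^{j+1} (r₁ r₂/(r₁+r₂)) s²} · (√2 θ)/(s² + 2θ²) ds for θ ∈ ℝ, and let Ĥ̃(r₁,r₂;ζ) = ∫_ℝ e^{−iζθ} H̃(r₁,r₂;θ) dθ be its Fourier transform in θ. Then there exist constants C, c₀, C₀ > 0, independent of j, r₁, r₂, ζ, such that for all j ≥ 1 and all r₁, r₂ > 0: if |ζ| ≤ c₀ (2^j r₁ r₂)^{1/2} then |Ĥ̃(r₁,r₂;ζ)| ≤ C 2^{−j(3/2+δ)} (2^j r₁ r₂)^{−1/2}, and if |ζ| ≥ C₀ (2^j r₁ r₂)^{1/2} then |Ĥ̃(r₁,r₂;ζ)| ≤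 C 2^{−j(3/2+δ)} |ζ|^{−1}. -/
open MeasureTheory Real Set

noncomputable section

/-- A symbol of order `0` on `(0, ∞)`. -/
def IsSymbol0 (a : ℝ → ℂ) : Prop :=
  ContDiffOn ℝ (⊤ : ℕ∞) a (Set.Ioi 0) ∧ (∃ M : ℝ, ∀ r > (0 : ℝ), ‖a r‖ ≤ M) ∧
    ∀ N : ℕ, ∃ C : ℝ, ∀ r > (0 : ℝ),
      ‖iteratedDerivWithin N a (Set.Ioi 0) r‖ ≤ C * r ^ (-(N : ℝ))

/-- The kernel `H̃(r₁, r₂; θ)`. -/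
def Htil (δ : ℝ) (a : ℝ → ℂ) (β χ : ℝ → ℝ) (j : ℕ) (r₁ r₂ θ : ℝ) : ℂ :=
  (((2 : ℝ) ^ (-(j : ℝ) * (3 / 2 + δ)) : ℝ) : ℂ) * ((χ θ : ℝ) : ℂ) *
    (((r₁ + r₂) ^ (-(3 / 2 + δ)) : ℝ) : ℂ) * ((β (r₁ + r₂) : ℝ) : ℂ) *
    a ((2 : ℝ) ^ (j : ℝ) * (r₁ + r₂)) *
    ∫ s in Set.Ioi (0 : ℝ),
      Complex.exp (Complex.I *
        (((2 : ℝ) ^ ((j : ℝ) + 1) * (r₁ * r₂ / (r₁ + r₂)) * s ^ 2 : ℝ) : ℂ)) *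
        ((Real.sqrt 2 * θ / (s ^ 2 + 2 * θ ^ 2) : ℝ) : ℂ)

/-- The Fourier transform of `H̃` in the angular variable. -/
def HtilFT (δ : ℝ) (a : ℝ → ℂ) (β χ : ℝ → ℝ) (j : ℕ) (r₁ r₂ ζ : ℝ) : ℂ :=
  ∫ θ : ℝ, Complex.exp (-Complex.I * ((ζ * θ : ℝ) : ℂ)) * Htil δ a β χ j r₁ r₂ θ

/-- Integration by parts bound. -/
lemma ibp_bound {R M : ℝ} (hR : 0 ≤ R) {w W : ℝ → ℝ} {g g' : ℝ → ℂ} {v V : ℝ → ℝ}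
    (hW : ∀ x, HasDerivAt W (w x) x) (hw : Continuous w) (hM : ∀ x, |W x| ≤ M)
    (hg : ∀ x, HasDerivAt g (g' x) x) (hg' : Continuous g') (hgR : g R = 0)
    (hV : ∀ x, HasDerivAt V (v x) x) (hv : Continuous v)
    (hgv : ∀ x ∈ Icc 0 R, ‖g' x‖ ≤ v x) :
    ‖∫ x in (0:ℝ)..R, ((w x : ℝ) : ℂ) * g x‖ ≤ |W 0| * ‖g 0‖ + M * (V R - V 0) := by
  have hM0 : 0 ≤ M := (abs_nonneg _).trans (hM 0)
  have h1 : ∫ x in (0:ℝ)..R, g x * ((w x : ℝ) : ℂ)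
      = g R * ((W R : ℝ) : ℂ) - g 0 * ((W 0 : ℝ) : ℂ) - ∫ x in (0:ℝ)..R, g' x * ((W x : ℝ) : ℂ) := by
    apply intervalIntegral.integral_mul_deriv_eq_deriv_mul
    · intro x _; exact hg x
    · intro x _; exact (hW x).ofReal_comp
    · exact hg'.intervalIntegrable _ _
    · exact (Complex.continuous_ofReal.comp hw).intervalIntegrable _ _
  have h2 : ∫ x in (0:ℝ)..R, v x = V R - V 0 :=
    intervalIntegral.integral_eq_sub_of_hasDerivAt (fun x _ => hV x) (hv.intervalIntegrable _ _)
  have h3 : ‖∫ x in (0:ℝ)..R, g' x * ((W x : ℝ) : ℂ)‖ ≤ ∫ x in (0:ℝ)..R, M * v x := by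
    apply intervalIntegral.norm_integral_le_of_norm_le hR
    · refine Filter.Eventually.of_forall fun x hx => ?_
      rw [norm_mul, Complex.norm_real, Real.norm_eq_abs, mul_comm]
      exact mul_le_mul (hM x) (hgv x ⟨hx.1.le, hx.2⟩) (norm_nonneg _) hM0
    · exact (continuous_const.mul hv).intervalIntegrable _ _
  rw [intervalIntegral.integral_const_mul, h2] at h3
  simp_rw [mul_comm (((w _ : ℝ)) : ℂ)]
  rw [h1, hgR, zero_mul, zero_sub]
  calc _ ≤ ‖-(g 0 * ((W 0 : ℝ) : ℂ))‖ + ‖∫ x in (0:ℝ)..R, g' x * ((W x : ℝ) : ℂ)‖ := norm_sub_le _ _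
    _ ≤ _ := by
      rw [norm_neg, norm_mul, Complex.norm_real, Real.norm_eq_abs, mul_comm]
      linarith

def Si (x : ℝ) : ℝ := ∫ t in (0:ℝ)..x, Real.sinc t

lemma Si_hasDeriv (x : ℝ) : HasDerivAt Si (Real.sinc x) x :=
  intervalIntegral.integral_hasDerivAt_right (Real.continuous_sinc.intervalIntegrable _ _)
    (Real.continuous_sinc.stronglyMeasurableAtFilter _ _) Real.continuous_sinc.continuousAt

lemma Si_neg (x : ℝ) : Si (-x) = - Si x := by
  unfold Si
  have := intervalIntegral.integral_comp_neg (a := 0) (b := x) Real.sinc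
  simp only [Real.sinc_neg, neg_zero] at this
  rw [this, intervalIntegral.integral_symm]

lemma Si_bound_pos (x : ℝ) (hx : 0 ≤ x) : |Si x| ≤ 4 := by
  have small : ∀ y, 0 ≤ y → y ≤ 1 → |Si y| ≤ 1 := by
    intro y h0 h1
    have := intervalIntegral.norm_integral_le_of_norm_le_const (a := 0) (b := y) (C := 1)
      (f := Real.sinc) (fun t _ => by simpa using Real.abs_sinc_le_one t)
    rw [sub_zero, abs_of_nonneg h0, Real.norm_eq_abs] at this
    unfold Si; linarith
  rcases le_total x 1 with h | h
  · linarith [small x hx h]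
  have h1 := small 1 zero_le_one le_rfl
  have hsplit : Si x = Si 1 + ∫ t in (1:ℝ)..x, Real.sinc t := by
    unfold Si
    rw [intervalIntegral.integral_add_adjacent_intervals] <;>
    exact Real.continuous_sinc.intervalIntegrable _ _
  -- antiderivatives
  have hne : ∀ t ∈ uIcc 1 x, t ≠ 0 := by
    intro t ht; rw [uIcc_of_le h] at ht; linarith [ht.1]
  have hci : ContinuousOn (fun t : ℝ => (t^2)⁻¹) (uIcc 1 x) :=
    (continuousOn_id.pow 2).inv₀ (fun t ht => pow_ne_zero 2 (hne t ht))
  have e1 : ∫ t in (1:ℝ)..x, (Real.sinc t + Real.cos t * (t^2)⁻¹ * (-1) * (-1) * (-1) + 2 * (Real.cos t * (t^2)⁻¹))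
      = -Real.cos x / x - (-Real.cos 1 / 1) := by
    apply intervalIntegral.integral_eq_sub_of_hasDerivAt (f := fun t => -Real.cos t / t)
    · intro t ht
      have := ((Real.hasDerivAt_cos t).neg).div (hasDerivAt_id t) (hne t ht)
      refine this.congr_deriv ?_
      have := hne t ht
      rw [Real.sinc_of_ne_zero this]
      simp only [id]
      field_simp
      simp
      ring
    · apply ContinuousOn.intervalIntegrable
      have := Real.continuous_sinc
      fun_prop
  have e3 : ∫ t in (1:ℝ)..x, (t^2)⁻¹ = -x⁻¹ - (-(1:ℝ)⁻¹) := by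
    apply intervalIntegral.integral_eq_sub_of_hasDerivAt (f := fun t => -t⁻¹)
    · intro t ht
      have := (hasDerivAt_inv (hne t ht)).neg
      rw [neg_neg] at this
      exact this
    · exact hci.intervalIntegrable
  have e2 : ‖∫ t in (1:ℝ)..x, Real.cos t * (t^2)⁻¹‖ ≤ ∫ t in (1:ℝ)..x, (t^2)⁻¹ := by
    apply intervalIntegral.norm_integral_le_of_norm_le h
    · refine Filter.Eventually.of_forall fun t _ => ?_
      rw [norm_mul, Real.norm_eq_abs, Real.norm_eq_abs, abs_of_nonneg (a := (t^2)⁻¹) (by positivity)]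
      exact mul_le_of_le_one_left (by positivity) (Real.abs_cos_le_one t)
    · exact hci.intervalIntegrable
  have e4 : ∫ t in (1:ℝ)..x, Real.sinc t = (-Real.cos x / x - (-Real.cos 1 / 1))
      - ∫ t in (1:ℝ)..x, Real.cos t * (t^2)⁻¹ := by
    rw [← e1, ← intervalIntegral.integral_sub]
    · congr 1; ext t; ring
    · apply ContinuousOn.intervalIntegrable
      have := Real.continuous_sinc
      fun_prop
    · apply ContinuousOn.intervalIntegrable
      fun_prop
  have hx0 : 0 < x := by linarith
  have e5 : |Real.cos x / x| ≤ 1 := by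
    rw [abs_div, abs_of_pos hx0, div_le_one hx0]
    linarith [Real.abs_cos_le_one x]
  have e6 := Real.abs_cos_le_one 1
  rw [e3, Real.norm_eq_abs] at e2
  have : 0 < x⁻¹ := by positivity
  rw [hsplit, e4, abs_le]
  rw [abs_le] at *
  rw [neg_div]
  norm_num at *
  have hxi : 0 < x⁻¹ := by positivity
  constructor <;> linarith [e2.1, e2.2, e5.1, e5.2, e6.1, e6.2, h1.1, h1.2]

lemma Si_bound (x : ℝ) : |Si x| ≤ 4 := by
  rcases le_total 0 x with h | h
  · exact Si_bound_pos x h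
  · rw [← abs_neg, ← Si_neg]; exact Si_bound_pos _ (by linarith)

def pp (τ B θ : ℝ) : ℂ := (τ : ℂ) - Complex.I * ((B * θ ^ 2 : ℝ) : ℂ)

def hh (τ B θ : ℝ) : ℂ := (pp τ B θ) ^ ((-(1/2) : ℝ) : ℂ)

lemma pp_re (τ B θ : ℝ) : (pp τ B θ).re = τ := by
  simp only [pp, Complex.sub_re, Complex.ofReal_im, Complex.mul_re, Complex.I_re, Complex.I_im,
    Complex.ofReal_re]
  ring

lemma pp_im (τ B θ : ℝ) : (pp τ B θ).im = -(B * θ ^ 2) := by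
  simp only [pp, Complex.sub_im, Complex.ofReal_im, Complex.mul_im, Complex.I_re, Complex.I_im,
    Complex.ofReal_re]
  ring

lemma pp_slit {τ : ℝ} (hτ : 0 < τ) (B θ : ℝ) : pp τ B θ ∈ Complex.slitPlane := by
  left; rw [pp_re]; exact hτ

lemma pp_ne {τ : ℝ} (hτ : 0 < τ) (B θ : ℝ) : pp τ B θ ≠ 0 :=
  Complex.slitPlane_ne_zero (pp_slit hτ B θ)

lemma pp_norm {τ B : ℝ} (hτ : 0 < τ) (hB : 0 < B) (θ : ℝ) :
    (τ + B * θ ^ 2) / 2 ≤ ‖pp τ B θ‖ := by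
  have h1 := Complex.abs_re_le_norm (pp τ B θ)
  have h2 := Complex.abs_im_le_norm (pp τ B θ)
  rw [pp_re, abs_of_pos hτ] at h1
  rw [pp_im, abs_neg, abs_of_nonneg (by positivity)] at h2
  linarith

lemma pp_rpow {τ B : ℝ} (hτ : 0 < τ) (hB : 0 < B) (θ : ℝ) {e : ℝ} (he : 0 ≤ e) (he2 : e ≤ 2) :
    ‖(pp τ B θ) ^ ((-e : ℝ) : ℂ)‖ ≤ 4 * (τ + B * θ ^ 2) ^ (-e) := by
  have hq : 0 < τ + B * θ ^ 2 := by positivity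
  rw [Complex.norm_cpow_real]
  calc _ ≤ ((τ + B * θ ^ 2) / 2) ^ (-e) :=
        Real.rpow_le_rpow_of_nonpos (by positivity) (pp_norm hτ hB θ) (by linarith)
    _ = (2:ℝ) ^ e * (τ + B * θ ^ 2) ^ (-e) := by
        rw [Real.div_rpow hq.le (by norm_num), Real.rpow_neg (by norm_num : (0:ℝ) ≤ 2)]
        field_simp
    _ ≤ _ := by
        gcongr
        calc (2:ℝ) ^ e ≤ 2 ^ (2:ℝ) := Real.rpow_le_rpow_of_exponent_le (by norm_num) he2
          _ = 4 := by norm_num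

lemma hh_norm {τ B : ℝ} (hτ : 0 < τ) (hB : 0 < B) (θ : ℝ) :
    ‖hh τ B θ‖ ≤ 4 * (τ + B * θ ^ 2) ^ (-(1/2) : ℝ) :=
  pp_rpow hτ hB θ (by norm_num) (by norm_num)

lemma hh_norm_tau {τ B : ℝ} (hτ : 0 < τ) (hB : 0 < B) (θ : ℝ) :
    ‖hh τ B θ‖ ≤ 4 * τ ^ (-(1/2) : ℝ) := by
  refine (hh_norm hτ hB θ).trans ?_
  gcongr 4 * ?_
  exact Real.rpow_le_rpow_of_nonpos hτ (by nlinarith [sq_nonneg θ]) (by norm_num)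

lemma th_q {τ B : ℝ} (hτ : 0 < τ) (hB : 0 < B) {θ : ℝ} (hθ : 0 ≤ θ) :
    θ * (τ + B * θ ^ 2) ^ (-(1/2) : ℝ) ≤ B ^ (-(1/2) : ℝ) := by
  rcases hθ.eq_or_lt with rfl | h
  · simp; positivity
  calc _ ≤ θ * (B * θ ^ 2) ^ (-(1/2) : ℝ) := by
        gcongr θ * ?_
        exact Real.rpow_le_rpow_of_nonpos (by positivity) (by linarith) (by norm_num)
    _ = _ := by
        rw [Real.mul_rpow hB.le (by positivity), ← Real.rpow_natCast θ 2, ← Real.rpow_mul h.le]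
        norm_num
        rw [Real.rpow_neg_one]
        field_simp

lemma pp_deriv (τ B θ : ℝ) : HasDerivAt (pp τ B) (-Complex.I * ((2 * B * θ : ℝ) : ℂ)) θ := by
  have h : HasDerivAt (fun θ : ℝ => B * θ ^ 2) (2 * B * θ) θ := by
    have := (hasDerivAt_pow 2 θ).const_mul B
    refine this.congr_deriv ?_
    norm_num; ring
  have := (h.ofReal_comp.const_mul Complex.I).const_sub (τ : ℂ)
  refine this.congr_deriv ?_
  ring

lemma hh_deriv {τ : ℝ} (hτ : 0 < τ) (B θ : ℝ) :
    HasDerivAt (hh τ B) (Complex.I * ((B * θ : ℝ) : ℂ) * (pp τ B θ) ^ ((-(3/2) : ℝ) : ℂ)) θ := by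
  have h := (pp_deriv τ B θ)
  have h2 : HasDerivAt (fun z : ℂ => z ^ ((-(1/2) : ℝ) : ℂ)) _ (pp τ B θ) :=
    (hasDerivAt_id (pp τ B θ)).cpow_const (pp_slit hτ B θ)
  have := h2.comp θ h
  refine this.congr_deriv ?_
  have e : (((-(1/2) : ℝ) : ℂ) - 1) = ((-(3/2) : ℝ) : ℂ) := by push_cast; ring
  simp only [id, e]
  push_cast; ring

lemma q_deriv {τ B : ℝ} (hτ : 0 < τ) (hB : 0 < B) (θ : ℝ) :
    HasDerivAt (fun θ => (τ + B * θ ^ 2) ^ (-(1/2) : ℝ))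
      (-(B * θ * (τ + B * θ ^ 2) ^ (-(3/2) : ℝ))) θ := by
  have hq : 0 < τ + B * θ ^ 2 := by positivity
  have h : HasDerivAt (fun θ : ℝ => τ + B * θ ^ 2) (2 * B * θ) θ := by
    have := ((hasDerivAt_pow 2 θ).const_mul B).const_add τ
    refine this.congr_deriv ?_
    norm_num; ring
  have := h.rpow_const (p := (-(1/2) : ℝ)) (Or.inl hq.ne')
  refine this.congr_deriv ?_
  rw [show (-(1/2) : ℝ) - 1 = -(3/2) by norm_num]
  ring

lemma thq_deriv {τ B : ℝ} (hτ : 0 < τ) (hB : 0 < B) (θ : ℝ) :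
    HasDerivAt (fun θ => θ * (τ + B * θ ^ 2) ^ (-(1/2) : ℝ))
      (τ * (τ + B * θ ^ 2) ^ (-(3/2) : ℝ)) θ := by
  have hq : 0 < τ + B * θ ^ 2 := by positivity
  have := (hasDerivAt_id θ).mul (q_deriv hτ hB θ)
  refine this.congr_deriv ?_
  have : (τ + B * θ ^ 2) ^ (-(1/2) : ℝ) = (τ + B * θ ^ 2) * (τ + B * θ ^ 2) ^ (-(3/2) : ℝ) := by
    rw [show (-(1/2) : ℝ) = 1 + -(3/2) by norm_num, Real.rpow_add hq, Real.rpow_one]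
  rw [this]
  simp only [id]
  ring

lemma thh_deriv {τ : ℝ} (hτ : 0 < τ) (B θ : ℝ) :
    HasDerivAt (fun θ : ℝ => (θ : ℂ) * hh τ B θ) ((τ : ℂ) * (pp τ B θ) ^ ((-(3/2) : ℝ) : ℂ)) θ := by
  have := ((hasDerivAt_id θ).ofReal_comp).mul (hh_deriv hτ B θ)
  refine this.congr_deriv ?_
  have : hh τ B θ = pp τ B θ * (pp τ B θ) ^ ((-(3/2) : ℝ) : ℂ) := by
    unfold hh
    rw [show ((-(1/2) : ℝ) : ℂ) = 1 + ((-(3/2) : ℝ) : ℂ) by push_cast; ring,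
      Complex.cpow_add _ _ (pp_ne hτ B θ), Complex.cpow_one]
  rw [this]
  simp only [id]
  generalize (pp τ B θ) ^ ((-(3/2) : ℝ) : ℂ) = z
  simp only [pp]
  push_cast
  ring

lemma pp_cont (e : ℝ) {τ : ℝ} (hτ : 0 < τ) (B : ℝ) :
    Continuous fun θ => (pp τ B θ) ^ ((-e : ℝ) : ℂ) := by
  apply Continuous.cpow
  · unfold pp; fun_prop
  · fun_prop
  · intro θ; exact pp_slit hτ B θ

lemma q_cont (e : ℝ) {τ B : ℝ} (hτ : 0 < τ) (hB : 0 < B) :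
    Continuous fun θ : ℝ => (τ + B * θ ^ 2) ^ e := by
  apply Continuous.rpow_const
  · fun_prop
  · intro θ; left; positivity

/-- Second claim for each `τ`. -/
lemma claim2 {τ B R X0 X1 ζ : ℝ} (hτ : 0 < τ) (hB : 0 < B) (hR : 0 ≤ R) (hζ : ζ ≠ 0)
    {χ : ℝ → ℝ} (hχ : ContDiff ℝ 1 χ) (h0 : ∀ x, |χ x| ≤ X0) (h1 : ∀ x, |deriv χ x| ≤ X1)
    (hχR : χ R = 0) :
    ‖∫ θ in (0:ℝ)..R, ((Real.sin (ζ * θ) : ℝ) : ℂ) * (((χ θ : ℝ) : ℂ) * hh τ B θ)‖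
      ≤ (8 * X0 + 4 * X1 * R) * τ ^ (-(1/2) : ℝ) / |ζ| := by
  have hX0 : 0 ≤ X0 := (abs_nonneg _).trans (h0 0)
  have hX1 : 0 ≤ X1 := (abs_nonneg _).trans (h1 0)
  have hd : ∀ x, HasDerivAt χ (deriv χ x) x := fun x =>
    (hχ.differentiable one_ne_zero x).hasDerivAt
  have hdc : Continuous (deriv χ) := hχ.continuous_deriv le_rfl
  have key := ibp_bound (R := R) (M := 1 / |ζ|) hR
    (w := fun θ => Real.sin (ζ * θ)) (W := fun θ => -Real.cos (ζ * θ) / ζ)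
    (g := fun θ => ((χ θ : ℝ) : ℂ) * hh τ B θ)
    (g' := fun θ => ((deriv χ θ : ℝ) : ℂ) * hh τ B θ +
      ((χ θ : ℝ) : ℂ) * (Complex.I * ((B * θ : ℝ) : ℂ) * (pp τ B θ) ^ ((-(3/2) : ℝ) : ℂ)))
    (V := fun θ => X1 * (4 * τ ^ (-(1/2) : ℝ)) * θ + X0 * 4 * (-(τ + B * θ ^ 2) ^ (-(1/2) : ℝ)))
    (v := fun θ => X1 * (4 * τ ^ (-(1/2) : ℝ)) +
      X0 * 4 * (-(-(B * θ * (τ + B * θ ^ 2) ^ (-(3/2) : ℝ)))))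
    ?_ ?_ ?_ ?_ ?_ ?_ ?_ ?_ ?_
  · refine key.trans ?_
    have e1 : |-Real.cos (ζ * 0) / ζ| = 1 / |ζ| := by
      simp [abs_div]
    have e2 : ‖((χ 0 : ℝ) : ℂ) * hh τ B 0‖ ≤ X0 * (4 * τ ^ (-(1/2) : ℝ)) := by
      rw [norm_mul, Complex.norm_real, Real.norm_eq_abs]
      exact mul_le_mul (h0 0) (hh_norm_tau hτ hB 0) (norm_nonneg _) hX0
    have e3 : 0 ≤ (τ + B * R ^ 2) ^ (-(1/2) : ℝ) := by positivity
    simp only [e1]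
    rw [← mul_add, div_mul_eq_mul_div, one_mul]
    gcongr
    simp only [mul_zero, add_zero, ne_eq, OfNat.ofNat_ne_zero, not_false_eq_true, zero_pow]
    nlinarith [mul_nonneg hX0 e3]
  · intro x
    have := ((((hasDerivAt_id x).const_mul ζ).cos).neg).div_const ζ
    refine this.congr_deriv ?_
    simp only [id]; field_simp
  · fun_prop
  · intro x
    rw [abs_div, abs_neg]
    gcongr
    exact Real.abs_cos_le_one _
  · intro x
    exact ((hd x).ofReal_comp).mul (hh_deriv hτ B x)
  · have c1 := pp_cont (1/2) hτ B
    have c2 := pp_cont (3/2) hτ B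
    have c3 := hχ.continuous
    unfold hh
    fun_prop
  · simp [hχR]
  · intro x
    have := ((hasDerivAt_id x).const_mul (X1 * (4 * τ ^ (-(1/2) : ℝ)))).add
      (((q_deriv hτ hB x).neg).const_mul (X0 * 4))
    refine this.congr_deriv ?_
    simp
  · have := q_cont (-(3/2)) hτ hB
    fun_prop
  · intro x hx
    refine (norm_add_le _ _).trans ?_
    rw [norm_mul, norm_mul, norm_mul, norm_mul, Complex.norm_real, Complex.norm_real,
      Complex.norm_real, Complex.norm_I, neg_neg, one_mul, Real.norm_eq_abs, Real.norm_eq_abs,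
      Real.norm_eq_abs, abs_of_nonneg (mul_nonneg hB.le hx.1)]
    have a1 : |deriv χ x| * ‖hh τ B x‖ ≤ X1 * (4 * τ ^ (-(1/2) : ℝ)) :=
      mul_le_mul (h1 x) (hh_norm_tau hτ hB x) (norm_nonneg _) hX1
    have a2 : |χ x| * (B * x * ‖(pp τ B x) ^ ((-(3/2) : ℝ) : ℂ)‖) ≤
        X0 * (B * x * (4 * (τ + B * x ^ 2) ^ (-(3/2) : ℝ))) :=
      mul_le_mul (h0 x) (mul_le_mul_of_nonneg_left
        (pp_rpow hτ hB x (by norm_num) (by norm_num)) (mul_nonneg hB.le hx.1))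
        (mul_nonneg (mul_nonneg hB.le hx.1) (norm_nonneg _)) hX0
    linarith

/-- First claim for each `τ`. -/
lemma claim1 {τ B R X0 X1 ζ : ℝ} (hτ : 0 < τ) (hB : 0 < B) (hR : 0 ≤ R)
    {χ : ℝ → ℝ} (hχ : ContDiff ℝ 1 χ) (h0 : ∀ x, |χ x| ≤ X0) (h1 : ∀ x, |deriv χ x| ≤ X1)
    (hχR : χ R = 0) :
    ‖∫ θ in (0:ℝ)..R, ((Real.sin (ζ * θ) : ℝ) : ℂ) * (((χ θ : ℝ) : ℂ) * hh τ B θ)‖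
      ≤ 16 * (X0 + X1 * R) * B ^ (-(1/2) : ℝ) := by
  have hX0 : 0 ≤ X0 := (abs_nonneg _).trans (h0 0)
  have hX1 : 0 ≤ X1 := (abs_nonneg _).trans (h1 0)
  have hd : ∀ x, HasDerivAt χ (deriv χ x) x := fun x =>
    (hχ.differentiable one_ne_zero x).hasDerivAt
  have hdc : Continuous (deriv χ) := hχ.continuous_deriv le_rfl
  have key := ibp_bound (R := R) (M := 4) hR
    (w := fun θ => Real.sinc (ζ * θ) * ζ) (W := fun θ => Si (ζ * θ))
    (g := fun θ => ((χ θ : ℝ) : ℂ) * ((θ : ℂ) * hh τ B θ))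
    (g' := fun θ => ((deriv χ θ : ℝ) : ℂ) * ((θ : ℂ) * hh τ B θ) +
      ((χ θ : ℝ) : ℂ) * ((τ : ℂ) * (pp τ B θ) ^ ((-(3/2) : ℝ) : ℂ)))
    (V := fun θ => X1 * (4 * B ^ (-(1/2) : ℝ)) * θ + X0 * 4 * (θ * (τ + B * θ ^ 2) ^ (-(1/2) : ℝ)))
    (v := fun θ => X1 * (4 * B ^ (-(1/2) : ℝ)) +
      X0 * 4 * (τ * (τ + B * θ ^ 2) ^ (-(3/2) : ℝ)))
    ?_ ?_ ?_ ?_ ?_ ?_ ?_ ?_ ?_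
  · have e : ∀ θ : ℝ, ((Real.sin (ζ * θ) : ℝ) : ℂ) * (((χ θ : ℝ) : ℂ) * hh τ B θ) =
        ((Real.sinc (ζ * θ) * ζ : ℝ) : ℂ) * (((χ θ : ℝ) : ℂ) * ((θ : ℂ) * hh τ B θ)) := by
      intro θ
      have : Real.sin (ζ * θ) = Real.sinc (ζ * θ) * ζ * θ := by
        rcases eq_or_ne (ζ * θ) 0 with h | h
        · rw [mul_assoc, h]; simp
        · rw [Real.sinc_of_ne_zero h, mul_assoc, div_mul_cancel₀ _ h]
      rw [this]; push_cast; ring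
    simp_rw [e]
    refine key.trans ?_
    have e1 : Si 0 = 0 := by simp [Si]
    have e3 := th_q hτ hB hR
    simp only [mul_zero, zero_mul, add_zero, e1, abs_zero, zero_add, sub_zero]
    nlinarith [mul_le_mul_of_nonneg_left e3 hX0]
  · intro x
    have := (Si_hasDeriv (ζ * x)).comp x ((hasDerivAt_id x).const_mul ζ)
    refine this.congr_deriv ?_
    simp
  · have := Real.continuous_sinc
    fun_prop
  · intro x; exact Si_bound _
  · intro x
    exact ((hd x).ofReal_comp).mul (thh_deriv hτ B x)
  · have c1 := pp_cont (1/2) hτ B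
    have c2 := pp_cont (3/2) hτ B
    have c3 := hχ.continuous
    unfold hh
    fun_prop
  · simp [hχR]
  · intro x
    have := ((hasDerivAt_id x).const_mul (X1 * (4 * B ^ (-(1/2) : ℝ)))).add
      ((thq_deriv hτ hB x).const_mul (X0 * 4))
    refine this.congr_deriv ?_
    simp
  · have := q_cont (-(3/2)) hτ hB
    fun_prop
  · intro x hx
    refine (norm_add_le _ _).trans ?_
    rw [norm_mul, norm_mul, norm_mul, norm_mul, Complex.norm_real, Complex.norm_real,
      Complex.norm_real, Complex.norm_real, Real.norm_eq_abs, Real.norm_eq_abs,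
      Real.norm_eq_abs, Real.norm_eq_abs, abs_of_nonneg hx.1, abs_of_pos hτ]
    have a0 : x * ‖hh τ B x‖ ≤ 4 * B ^ (-(1/2) : ℝ) := by
      have := mul_le_mul_of_nonneg_left (hh_norm hτ hB x) hx.1
      linarith [th_q hτ hB hx.1]
    have a1 : |deriv χ x| * (x * ‖hh τ B x‖) ≤ X1 * (4 * B ^ (-(1/2) : ℝ)) :=
      mul_le_mul (h1 x) a0 (mul_nonneg hx.1 (norm_nonneg _)) hX1
    have a2 : |χ x| * (τ * ‖(pp τ B x) ^ ((-(3/2) : ℝ) : ℂ)‖) ≤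
        X0 * (τ * (4 * (τ + B * x ^ 2) ^ (-(3/2) : ℝ))) :=
      mul_le_mul (h0 x) (mul_le_mul_of_nonneg_left
        (pp_rpow hτ hB x (by norm_num) (by norm_num)) hτ.le)
        (mul_nonneg hτ.le (norm_nonneg _)) hX0
    linarith

def FF (A θ : ℝ) : ℂ := ∫ s in Set.Ioi (0 : ℝ),
  Complex.exp (Complex.I * ((A * s ^ 2 : ℝ) : ℂ)) *
    ((Real.sqrt 2 * θ / (s ^ 2 + 2 * θ ^ 2) : ℝ) : ℂ)

lemma FF_scale (A : ℝ) {θ : ℝ} (hθ : 0 < θ) : FF A θ = ∫ u in Set.Ioi (0 : ℝ),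
    Complex.exp (Complex.I * ((2 * A * θ ^ 2 * u ^ 2 : ℝ) : ℂ)) * (((1 + u ^ 2)⁻¹ : ℝ) : ℂ) := by
  have hb : 0 < Real.sqrt 2 * θ := by positivity
  have h := integral_comp_mul_left_Ioi' (fun s : ℝ =>
    Complex.exp (Complex.I * ((A * s ^ 2 : ℝ) : ℂ)) *
    ((Real.sqrt 2 * θ / (s ^ 2 + 2 * θ ^ 2) : ℝ) : ℂ)) 0 hb
  rw [mul_zero] at h
  unfold FF
  rw [← h, ← integral_smul]
  congr 1
  ext u
  have h2 : (Real.sqrt 2) ^ 2 = 2 := Real.sq_sqrt (by norm_num)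
  rw [Complex.real_smul, mul_left_comm, ← Complex.ofReal_mul]
  congr 3
  · congr 1
    rw [mul_pow, mul_pow, h2]; ring
  · rw [mul_pow, mul_pow, h2]
    have : (1 + u ^ 2) ≠ 0 := by positivity
    have : 2 * θ ^ 2 * u ^ 2 + 2 * θ ^ 2 ≠ 0 := by positivity
    field_simp
    rw [h2]; ring

lemma exp_int {b : ℝ} (hb : 0 < b) : ∫ τ in Set.Ioi (0:ℝ), Real.exp (-b * τ) = b⁻¹ := by
  have := integral_exp_mul_Ioi (a := -b) (by linarith) 0
  rw [this]; simp [neg_div_neg_eq]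

lemma gauss_hh {τ : ℝ} (hτ : 0 < τ) (B θ : ℝ) :
    ∫ u in Set.Ioi (0:ℝ), Complex.exp (-(pp τ B θ) * (u : ℂ) ^ 2) =
      ((Real.sqrt π / 2 : ℝ) : ℂ) * hh τ B θ := by
  rw [integral_gaussian_complex_Ioi (by rw [pp_re]; exact hτ)]
  have hp := pp_ne hτ B θ
  have harg : (pp τ B θ).arg ≠ π := Complex.slitPlane_arg_ne_pi (pp_slit hτ B θ)
  have : ((π : ℂ) / pp τ B θ) ^ (1 / 2 : ℂ) = ((Real.sqrt π : ℝ) : ℂ) * hh τ B θ := by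
    rw [div_eq_mul_inv, Complex.cpow_def_of_ne_zero (mul_ne_zero (by simp [Real.pi_ne_zero]) (inv_ne_zero hp)),
      Complex.log_ofReal_mul Real.pi_pos (inv_ne_zero hp), Complex.log_inv _ harg, hh,
      Complex.cpow_def_of_ne_zero hp, Real.sqrt_eq_rpow, Real.rpow_def_of_pos Real.pi_pos,
      Complex.ofReal_exp, ← Complex.exp_add]
    congr 1
    push_cast; ring
  rw [this]; push_cast; ring

lemma FF_eq {A : ℝ} (θ : ℝ) (hθ : 0 < θ) : FF A θ = ((Real.sqrt π / 2 : ℝ) : ℂ) *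
    ∫ τ in Set.Ioi (0:ℝ), ((Real.exp (-τ) : ℝ) : ℂ) * hh τ (2 * A) θ := by
  rw [FF_scale A hθ]
  set f : ℝ → ℝ → ℂ := fun u τ => Complex.exp (Complex.I * ((2 * A * θ ^ 2 * u ^ 2 : ℝ) : ℂ)) *
    ((Real.exp (-(1 + u ^ 2) * τ) : ℝ) : ℂ) with hf
  have hnorm : ∀ u τ, ‖f u τ‖ = Real.exp (-(1 + u ^ 2) * τ) := by
    intro u τ
    rw [hf]
    simp only
    rw [norm_mul, mul_comm Complex.I, Complex.norm_exp_ofReal_mul_I, one_mul, Complex.norm_real,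
      Real.norm_of_nonneg (Real.exp_pos _).le]
  have hpos : ∀ u : ℝ, 0 < 1 + u ^ 2 := fun u => by positivity
  have e1 : ∀ u : ℝ, Complex.exp (Complex.I * ((2 * A * θ ^ 2 * u ^ 2 : ℝ) : ℂ)) *
      (((1 + u ^ 2)⁻¹ : ℝ) : ℂ) = ∫ τ in Set.Ioi (0:ℝ), f u τ := by
    intro u
    rw [hf]
    simp only
    rw [integral_const_mul, integral_complex_ofReal, exp_int (hpos u)]
  simp_rw [e1]
  have hcont : Continuous (Function.uncurry f) := by
    rw [hf]; unfold Function.uncurry; fun_prop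
  rw [integral_integral_swap]
  · rw [← integral_const_mul]
    apply setIntegral_congr_fun measurableSet_Ioi
    intro τ hτ
    simp only
    rw [mul_left_comm, ← gauss_hh hτ, ← integral_const_mul]
    congr 1
    ext u
    simp only [hf, pp, Complex.ofReal_exp]
    rw [← Complex.exp_add, ← Complex.exp_add]
    congr 1
    push_cast; ring
  · rw [integrable_prod_iff hcont.aestronglyMeasurable]
    constructor
    · refine Filter.Eventually.of_forall fun u => ?_
      have h1 : Integrable (fun τ => Real.exp (-(1 + u ^ 2) * τ)) (volume.restrict (Ioi 0)) :=
        integrableOn_exp_mul_Ioi (by linarith [hpos u]) 0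
      refine h1.mono' ?_ (Filter.Eventually.of_forall fun τ => ?_)
      · exact (hcont.comp (Continuous.prodMk_right u)).aestronglyMeasurable
      · exact (hnorm u τ).le
    · simp only [Function.uncurry_apply_pair, hnorm]
      simp_rw [exp_int (hpos _)]
      exact integrable_inv_one_add_sq.integrableOn

lemma core {A R X0 ζ : ℝ} (hA : 0 < A) (hR : 0 ≤ R)
    {χ : ℝ → ℝ} (hχ : Continuous χ) (h0 : ∀ x, |χ x| ≤ X0)
    (hχR : ∀ x, R ≤ x → χ x = 0) {D : ℝ → ℝ}
    (hD : ∀ τ, 0 < τ → ‖∫ θ in (0:ℝ)..R,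
      ((Real.sin (ζ * θ) : ℝ) : ℂ) * (((χ θ : ℝ) : ℂ) * hh τ (2 * A) θ)‖ ≤ D τ)
    (hDi : IntegrableOn (fun τ => Real.exp (-τ) * D τ) (Ioi 0)) :
    ‖∫ θ in Ioi (0:ℝ), ((Real.sin (ζ * θ) : ℝ) : ℂ) * (((χ θ : ℝ) : ℂ) * FF A θ)‖ ≤
      Real.sqrt π / 2 * ∫ τ in Ioi (0:ℝ), Real.exp (-τ) * D τ := by
  have hX0 : 0 ≤ X0 := (abs_nonneg _).trans (h0 0)
  have hB : 0 < 2 * A := by linarith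
  set f : ℝ → ℝ → ℂ := fun θ τ => ((Real.exp (-τ) : ℝ) : ℂ) *
    (((Real.sin (ζ * θ) : ℝ) : ℂ) * (((χ θ : ℝ) : ℂ) * hh τ (2 * A) θ)) with hf
  have e1 : ∫ θ in Ioi (0:ℝ), ((Real.sin (ζ * θ) : ℝ) : ℂ) * (((χ θ : ℝ) : ℂ) * FF A θ) =
      ((Real.sqrt π / 2 : ℝ) : ℂ) * ∫ θ in Ioc 0 R, ∫ τ in Ioi (0:ℝ), f θ τ := by
    rw [setIntegral_eq_of_subset_of_forall_sdiff_eq_zero measurableSet_Ioi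
      (s := Ioc 0 R) Ioc_subset_Ioi_self, ← integral_const_mul]
    · apply setIntegral_congr_fun measurableSet_Ioc
      intro θ hθ
      simp only [hf]
      rw [FF_eq θ hθ.1]
      have : ∀ τ, ((Real.exp (-τ) : ℝ) : ℂ) *
          (((Real.sin (ζ * θ) : ℝ) : ℂ) * (((χ θ : ℝ) : ℂ) * hh τ (2 * A) θ)) =
          (((Real.sin (ζ * θ) : ℝ) : ℂ) * ((χ θ : ℝ) : ℂ)) *
            (((Real.exp (-τ) : ℝ) : ℂ) * hh τ (2 * A) θ) := by intro τ; ring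
      simp_rw [this]
      rw [integral_const_mul]
      ring
    · intro θ hθ
      have : R ≤ θ := by
        by_contra h
        exact hθ.2 ⟨hθ.1, (not_le.mp h).le⟩
      simp [hχR θ this]
  have hmeas : Measurable (Function.uncurry f) := by
    have c1 : Measurable (fun p : ℝ × ℝ => hh p.2 (2 * A) p.1) := by
      unfold hh
      apply Measurable.pow_const
      unfold pp
      fun_prop
    have c2 := hχ.measurable
    rw [hf]; unfold Function.uncurry
    fun_prop
  have hint : Integrable (Function.uncurry f)
      ((volume.restrict (Ioc 0 R)).prod (volume.restrict (Ioi 0))) := by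
    have g1 : Integrable (fun τ : ℝ => Real.exp (-τ) * τ ^ ((1/2 : ℝ) - 1)) (volume.restrict (Ioi 0)) :=
      Real.GammaIntegral_convergent (by norm_num)
    have g2 : Integrable (fun _ : ℝ => 4 * X0) (volume.restrict (Ioc 0 R)) :=
      integrable_const _
    refine (g2.mul_prod g1).mono' hmeas.aestronglyMeasurable ?_
    rw [Measure.prod_restrict]
    refine (ae_restrict_iff' (measurableSet_Ioc.prod measurableSet_Ioi)).mpr
      (Filter.Eventually.of_forall fun p hp => ?_)
    have hτ : 0 < p.2 := hp.2
    simp only [Function.uncurry, hf]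
    rw [norm_mul, norm_mul, norm_mul, Complex.norm_real, Complex.norm_real, Complex.norm_real,
      Real.norm_of_nonneg (Real.exp_pos _).le, Real.norm_eq_abs, Real.norm_eq_abs]
    have a1 := Real.abs_sin_le_one (ζ * p.1)
    have a2 := hh_norm_tau hτ hB p.1
    have a3 : |χ p.1| * ‖hh p.2 (2 * A) p.1‖ ≤ X0 * (4 * p.2 ^ (-(1/2) : ℝ)) :=
      mul_le_mul (h0 _) a2 (norm_nonneg _) hX0
    have a4 : |Real.sin (ζ * p.1)| * (|χ p.1| * ‖hh p.2 (2 * A) p.1‖) ≤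
        1 * (X0 * (4 * p.2 ^ (-(1/2) : ℝ))) := mul_le_mul a1 a3 (by positivity) zero_le_one
    have a5 := mul_le_mul_of_nonneg_left a4 (Real.exp_pos (-p.2)).le
    rw [show (1/2 : ℝ) - 1 = -(1/2) by norm_num]
    linarith
  rw [e1, integral_integral_swap hint, norm_mul, Complex.norm_real,
    Real.norm_of_nonneg (by positivity)]
  gcongr
  apply norm_integral_le_of_norm_le hDi
  refine (ae_restrict_iff' measurableSet_Ioi).mpr (Filter.Eventually.of_forall fun τ hτ => ?_)
  simp only [hf]
  rw [integral_const_mul, norm_mul, Complex.norm_real, Real.norm_of_nonneg (Real.exp_pos _).le]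
  gcongr
  rw [← intervalIntegral.integral_of_le hR]
  exact hD τ hτ

lemma FF_neg (A θ : ℝ) : FF A (-θ) = - FF A θ := by
  unfold FF
  rw [← integral_neg]
  congr 1
  ext s
  rw [neg_sq, mul_neg, neg_div, Complex.ofReal_neg, mul_neg]

def PP (δ : ℝ) (a : ℝ → ℂ) (β : ℝ → ℝ) (j : ℕ) (r₁ r₂ : ℝ) : ℂ :=
  (((2 : ℝ) ^ (-(j : ℝ) * (3 / 2 + δ)) : ℝ) : ℂ) *
    (((r₁ + r₂) ^ (-(3 / 2 + δ)) : ℝ) : ℂ) * ((β (r₁ + r₂) : ℝ) : ℂ) *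
    a ((2 : ℝ) ^ (j : ℝ) * (r₁ + r₂))

lemma Htil_eq (δ : ℝ) (a : ℝ → ℂ) (β χ : ℝ → ℝ) (j : ℕ) (r₁ r₂ θ : ℝ) :
    Htil δ a β χ j r₁ r₂ θ = PP δ a β j r₁ r₂ *
      (((χ θ : ℝ) : ℂ) * FF ((2 : ℝ) ^ ((j : ℝ) + 1) * (r₁ * r₂ / (r₁ + r₂))) θ) := by
  unfold Htil PP FF
  ring

lemma HtilFT_bound (δ : ℝ) (a : ℝ → ℂ) (β χ : ℝ → ℝ) (hχ : ∀ x, χ (-x) = χ x) (j : ℕ)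
    (r₁ r₂ ζ : ℝ) :
    ‖HtilFT δ a β χ j r₁ r₂ ζ‖ ≤ ‖PP δ a β j r₁ r₂‖ * (2 *
      ‖∫ θ in Ioi (0:ℝ), ((Real.sin (ζ * θ) : ℝ) : ℂ) *
        (((χ θ : ℝ) : ℂ) * FF ((2 : ℝ) ^ ((j : ℝ) + 1) * (r₁ * r₂ / (r₁ + r₂))) θ)‖) := by
  unfold HtilFT
  simp_rw [Htil_eq]
  set A := (2 : ℝ) ^ ((j : ℝ) + 1) * (r₁ * r₂ / (r₁ + r₂))
  set P := PP δ a β j r₁ r₂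
  set f : ℝ → ℂ := fun θ => Complex.exp (-Complex.I * ((ζ * θ : ℝ) : ℂ)) *
    (P * (((χ θ : ℝ) : ℂ) * FF A θ)) with hf
  by_cases hi : Integrable f
  · have h1 : ∫ θ, f θ = ∫ θ in Ioi (0:ℝ), (f (-θ) + f θ) := by
      rw [integral_add]
      · rw [integral_comp_neg_Ioi 0 f, neg_zero, ← setIntegral_union (Iic_disjoint_Ioi le_rfl)
          measurableSet_Ioi hi.integrableOn hi.integrableOn, Iic_union_Ioi, setIntegral_univ]
      · exact hi.comp_neg.integrableOn
      · exact hi.integrableOn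
    have h2 : ∀ θ, f (-θ) + f θ = (-2 * Complex.I * P) * (((Real.sin (ζ * θ) : ℝ) : ℂ) *
        (((χ θ : ℝ) : ℂ) * FF A θ)) := by
      intro θ
      simp only [hf, hχ, FF_neg]
      rw [Complex.ofReal_sin, Complex.sin]
      rw [show -((ζ * θ : ℝ) : ℂ) * Complex.I = -Complex.I * ((ζ * θ : ℝ) : ℂ) by ring,
        show -Complex.I * ((ζ * -θ : ℝ) : ℂ) = ((ζ * θ : ℝ) : ℂ) * Complex.I by push_cast; ring]
      linear_combination (P * (((χ θ : ℝ) : ℂ) * FF A θ)) * (Complex.exp (-Complex.I * ((ζ * θ : ℝ) : ℂ)) - Complex.exp (((ζ * θ : ℝ) : ℂ) * Complex.I)) * Complex.I_sq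
    rw [h1]
    simp_rw [h2]
    rw [integral_const_mul, norm_mul, norm_mul, norm_mul, Complex.norm_I]
    simp only [norm_neg, Complex.norm_ofNat]
    apply le_of_eq; ring
  · rw [integral_undef hi, norm_zero]
    positivity

theorem stmt15 (δ : ℝ) (hδ : 0 ≤ δ) (a : ℝ → ℂ) (ha : IsSymbol0 a)
    (β : ℝ → ℝ) (hβ : ContDiff ℝ (⊤ : ℕ∞) β)
    (hβs : Function.support β ⊆ Set.Icc (3 / 8) (4 / 3)) :
    ∃ ε₀ : ℝ, 0 < ε₀ ∧ ∀ ε : ℝ, 0 < ε → ε ≤ ε₀ →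
      ∀ χ : ℝ → ℝ, ContDiff ℝ (⊤ : ℕ∞) χ → (∀ x, χ (-x) = χ x) →
        Function.support χ ⊆ Set.Icc (-ε) ε →
        ∃ C c₀ C₀ : ℝ, 0 < C ∧ 0 < c₀ ∧ 0 < C₀ ∧
          ∀ (j : ℕ), 1 ≤ j → ∀ r₁ r₂ ζ : ℝ, 0 < r₁ → 0 < r₂ →
            (|ζ| ≤ c₀ * ((2 : ℝ) ^ (j : ℝ) * r₁ * r₂) ^ ((1 : ℝ) / 2) →
              ‖HtilFT δ a β χ j r₁ r₂ ζ‖ ≤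
                C * (2 : ℝ) ^ (-(j : ℝ) * (3 / 2 + δ)) *
                  ((2 : ℝ) ^ (j : ℝ) * r₁ * r₂) ^ (-(1 : ℝ) / 2)) ∧
            (C₀ * ((2 : ℝ) ^ (j : ℝ) * r₁ * r₂) ^ ((1 : ℝ) / 2) ≤ |ζ| →
              ‖HtilFT δ a β χ j r₁ r₂ ζ‖ ≤
                C * (2 : ℝ) ^ (-(j : ℝ) * (3 / 2 + δ)) / |ζ|) := by
  obtain ⟨-, ⟨Ma, hMa⟩, -⟩ := ha
  have hMa0 : 0 ≤ Ma := (norm_nonneg _).trans (hMa 1 one_pos)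
  obtain ⟨Mb, hMb⟩ := hβ.continuous.bounded_above_of_compact_support
    (HasCompactSupport.of_support_subset_isCompact isCompact_Icc hβs)
  have hMb0 : 0 ≤ Mb := (norm_nonneg _).trans (hMb 1)
  refine ⟨1, one_pos, fun ε hε _ χ hχ heven hχs => ?_⟩
  have hcs : HasCompactSupport χ := HasCompactSupport.of_support_subset_isCompact isCompact_Icc hχs
  have hχ1 : ContDiff ℝ 1 χ := hχ.of_le (by exact_mod_cast le_top)
  obtain ⟨X0, hX0⟩ := hχ1.continuous.bounded_above_of_compact_support hcs
  obtain ⟨X1, hX1⟩ := (hχ1.continuous_deriv le_rfl).bounded_above_of_compact_support hcs.deriv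
  simp only [Real.norm_eq_abs] at hX0 hX1
  have hX00 : 0 ≤ X0 := (abs_nonneg _).trans (hX0 0)
  have hX10 : 0 ≤ X1 := (abs_nonneg _).trans (hX1 0)
  set R := ε + 1 with hRdef
  have hR : 0 ≤ R := by positivity
  have hχR : ∀ x, R ≤ x → χ x = 0 := by
    intro x hx
    by_contra h
    have := (hχs (Function.mem_support.mpr h)).2
    linarith
  set G := ∫ τ in Ioi (0:ℝ), Real.exp (-τ) * τ ^ (-(1/2) : ℝ) with hG
  have hG0 : 0 ≤ G := by
    apply setIntegral_nonneg measurableSet_Ioi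
    intro τ hτ
    exact mul_nonneg (Real.exp_pos _).le (Real.rpow_nonneg (le_of_lt hτ) _)
  have hGi : IntegrableOn (fun τ : ℝ => Real.exp (-τ) * τ ^ (-(1/2) : ℝ)) (Ioi 0) := by
    have := Real.GammaIntegral_convergent (s := 1/2) (by norm_num)
    rwa [show (1/2 : ℝ) - 1 = -(1/2) by norm_num] at this
  set K := (3/8 : ℝ) ^ (-(3/2 + δ)) * Mb * Ma with hK
  have hK0 : 0 ≤ K := by positivity
  set Y1 := 16 * (X0 + X1 * R) with hY1
  set Y2 := (8 * X0 + 4 * X1 * R) with hY2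
  have hY10 : 0 ≤ Y1 := by positivity
  have hY20 : 0 ≤ Y2 := by positivity
  have hZ1 : 0 ≤ K * Real.sqrt π * Y1 := by positivity
  have hZ2 : 0 ≤ K * Real.sqrt π * (Y2 * G) := by positivity
  refine ⟨1 + K * Real.sqrt π * Y1 + K * Real.sqrt π * (Y2 * G), 1, 1, by positivity,
    one_pos, one_pos, fun j _ r₁ r₂ ζ hr₁ hr₂ => ?_⟩
  have hmain := HtilFT_bound δ a β χ heven j r₁ r₂ ζ
  set A := (2 : ℝ) ^ ((j : ℝ) + 1) * (r₁ * r₂ / (r₁ + r₂)) with hA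
  have hr : 0 < r₁ + r₂ := by positivity
  have hA0 : 0 < A := by positivity
  set l := (2 : ℝ) ^ (j : ℝ) * r₁ * r₂ with hl
  have hl0 : 0 < l := by positivity
  set T := (2 : ℝ) ^ (-(j : ℝ) * (3 / 2 + δ)) with hT
  have hT0 : 0 < T := by positivity
  have hP : PP δ a β j r₁ r₂ = 0 ∨ (‖PP δ a β j r₁ r₂‖ ≤ T * K ∧ l ≤ 2 * A) := by
    by_cases hb : β (r₁ + r₂) = 0
    · left; simp [PP, hb]
    right
    have hmem := hβs (Function.mem_support.mpr hb)
    constructor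
    · unfold PP
      rw [norm_mul, norm_mul, norm_mul, Complex.norm_real, Complex.norm_real, Complex.norm_real,
        Real.norm_of_nonneg (by positivity), Real.norm_of_nonneg (by positivity)]
      have b1 : (r₁ + r₂) ^ (-(3/2 + δ)) ≤ (3/8 : ℝ) ^ (-(3/2 + δ)) :=
        Real.rpow_le_rpow_of_nonpos (by norm_num) hmem.1 (by linarith)
      have b2 := hMb (r₁ + r₂)
      have b3 := hMa ((2 : ℝ) ^ (j : ℝ) * (r₁ + r₂)) (by positivity)
      rw [hK, mul_assoc, mul_assoc, mul_assoc]
      gcongr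
    · rw [hA, hl, Real.rpow_add (by norm_num), Real.rpow_one]
      rw [show 2 * ((2 : ℝ) ^ (j : ℝ) * 2 * (r₁ * r₂ / (r₁ + r₂))) =
        ((2 : ℝ) ^ (j : ℝ) * r₁ * r₂ * 4) / (r₁ + r₂) by ring, le_div_iff₀ hr]
      apply mul_le_mul_of_nonneg_left _ hl0.le
      linarith [hmem.2]
  rcases hP with hP | ⟨hP, hlA⟩
  · rw [hP, norm_zero, zero_mul] at hmain
    exact ⟨fun _ => hmain.trans (by positivity), fun _ => hmain.trans (by positivity)⟩
  have hfin : ∀ Q : ℝ, ‖∫ θ in Ioi (0:ℝ), ((Real.sin (ζ * θ) : ℝ) : ℂ) *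
      (((χ θ : ℝ) : ℂ) * FF A θ)‖ ≤ Real.sqrt π / 2 * Q →
      ‖HtilFT δ a β χ j r₁ r₂ ζ‖ ≤ T * (K * Real.sqrt π * Q) := by
    intro Q hQ
    refine hmain.trans ?_
    calc _ ≤ (T * K) * (2 * (Real.sqrt π / 2 * Q)) := by gcongr
      _ = _ := by ring
  constructor
  · intro _
    have h := core (ζ := ζ) (D := fun _ => Y1 * (2 * A) ^ (-(1/2) : ℝ)) hA0 hR hχ1.continuous
      hX0 hχR
      (fun τ hτ => claim1 hτ (by linarith) hR hχ1 hX0 hX1 (hχR R le_rfl))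
      (by
        have := integrableOn_exp_mul_Ioi (a := -1) (by norm_num) 0
        simp only [neg_one_mul] at this
        exact this.mul_const _)
    rw [integral_mul_const, integral_exp_neg_Ioi_zero, one_mul] at h
    refine (hfin _ h).trans ?_
    have hpow : (2 * A) ^ (-(1/2) : ℝ) ≤ l ^ (-(1:ℝ)/2) := by
      rw [show (-(1:ℝ)/2) = -(1/2) by norm_num]
      exact Real.rpow_le_rpow_of_nonpos hl0 hlA (by norm_num)
    calc T * (K * Real.sqrt π * (Y1 * (2 * A) ^ (-(1/2) : ℝ)))
        ≤ T * (K * Real.sqrt π * (Y1 * l ^ (-(1:ℝ)/2))) := by gcongr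
      _ = (K * Real.sqrt π * Y1) * T * l ^ (-(1:ℝ)/2) := by ring
      _ ≤ _ := by gcongr; linarith
  · intro hζ
    have hζ0 : 0 < |ζ| := lt_of_lt_of_le (by positivity) hζ
    have h := core (ζ := ζ) (D := fun τ => Y2 * τ ^ (-(1/2) : ℝ) / |ζ|) hA0 hR hχ1.continuous
      hX0 hχR
      (fun τ hτ => claim2 hτ (by linarith) hR (abs_pos.mp hζ0) hχ1 hX0 hX1 (hχR R le_rfl))
      (by
        have := hGi.mul_const (Y2 / |ζ|)
        refine this.congr (Filter.Eventually.of_forall fun τ => ?_)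
        simp only; ring)
    have e : ∫ τ in Ioi (0:ℝ), Real.exp (-τ) * (Y2 * τ ^ (-(1/2) : ℝ) / |ζ|) = G * (Y2 / |ζ|) := by
      rw [hG, ← integral_mul_const]
      congr 1; ext τ; ring
    rw [e] at h
    refine (hfin _ h).trans ?_
    calc T * (K * Real.sqrt π * (G * (Y2 / |ζ|)))
        = (K * Real.sqrt π * (Y2 * G)) * T / |ζ| := by ring
      _ ≤ _ := by gcongr; linarith
end
end

section
/- Let n ≥ 1 be an integer and δ ≥ 0, and let K^δ(x) = ∫_{ℝⁿ} e^{i x·ξ} (1 − |ξ|²)₊^δ dξ be the kernel of the Bochner–Riesz mean of order δ for the Laplacian at λ = 1. Then there exist smooth functions a₁, a₂ : (0,∞) → ℂ and a constant C such that: (i) a₁ and a₂ are bounded and for every integer N ≥ 0 there is C_N with |a_i^{(N)}(r)| ≤ C_N r^{−N} for all r > 0 and i = 1,2; (ii) there exist c > 0 and R > 0 with |a_i(r)| ≥ c for all r ≥ R and i = 1,2; (iii) |K^δ(x) − a₁(|x|) e^{i|x|} (1+|x|)^{−(n+1)/2−δ} − a₂(|x|) e^{−i|x|} (1+|x|)^{−(n+1)/2−δ}|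 ≤ C (1+|x|)^{−n−1} for all x ∈ ℝⁿ∖{0}. -/
open MeasureTheory Real Set
open scoped RealInnerProductSpace

noncomputable section

/-- The kernel of the Bochner–Riesz mean of order `δ` at `λ = 1` on `ℝⁿ`:
`K^δ(x) = ∫_{ℝⁿ} e^{i x·ξ} (1 - |ξ|²)₊^δ dξ`. -/
def BRker (n : ℕ) (δ : ℝ) (x : EuclideanSpace ℝ (Fin n)) : ℂ :=
  ∫ ξ : EuclideanSpace ℝ (Fin n),
    Complex.exp (Complex.I * ((⟪x, ξ⟫ : ℝ) : ℂ)) *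
      (((if 0 ≤ 1 - ‖ξ‖ ^ 2 then (1 - ‖ξ‖ ^ 2) ^ δ else 0 : ℝ)) : ℂ)

lemma laplace_bound (s : ℝ) (hs : 0 ≤ s) : ∃ C : ℝ, 0 ≤ C ∧ ∀ r : ℝ, 0 < r →
    ∫ t in (0:ℝ)..1, t ^ s * Real.exp (-(r * t)) ≤ C * (1 + r) ^ (-s - 1) := by
  refine ⟨Real.exp 1 * Real.Gamma (s + 1), by positivity, fun r hr => ?_⟩
  have h1 := Real.integral_rpow_mul_exp_neg_mul_Ioi (a := s + 1) (r := 1 + r) (by linarith) (by linarith)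
  have hint : IntegrableOn (fun t : ℝ => t ^ s * Real.exp (-((1 + r) * t))) (Ioi 0) := by
    have := integrableOn_rpow_mul_exp_neg_mul_rpow (p := 1) (s := s) (b := 1 + r)
      (by linarith) one_pos (by linarith)
    simpa only [Real.rpow_one, neg_mul] using this
  have h2 : ∫ t in (0:ℝ)..1, t ^ s * Real.exp (-(r * t)) ≤
      ∫ t in (0:ℝ)..1, Real.exp 1 * (t ^ s * Real.exp (-((1 + r) * t))) := by
    apply intervalIntegral.integral_mono_on zero_le_one
    · apply Continuous.intervalIntegrable
      have : Continuous (fun t : ℝ => t ^ s) := Real.continuous_rpow_const hs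
      fun_prop
    · apply Continuous.intervalIntegrable
      have : Continuous (fun t : ℝ => t ^ s) := Real.continuous_rpow_const hs
      fun_prop
    · intro t ht
      have : Real.exp (-(r * t)) ≤ Real.exp 1 * Real.exp (-((1 + r) * t)) := by
        rw [← Real.exp_add]
        apply Real.exp_le_exp.mpr
        nlinarith [ht.1, ht.2]
      have h0 : 0 ≤ t ^ s := Real.rpow_nonneg ht.1 _
      calc t ^ s * Real.exp (-(r * t)) ≤ t ^ s * (Real.exp 1 * Real.exp (-((1 + r) * t))) := by
            gcongr
        _ = _ := by ring
  refine h2.trans ?_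
  rw [intervalIntegral.integral_const_mul, mul_assoc]
  gcongr
  rw [intervalIntegral.integral_of_le zero_le_one]
  have h3 : ∫ t in Ioc (0:ℝ) 1, t ^ s * Real.exp (-((1 + r) * t)) ≤
      ∫ t in Ioi (0:ℝ), t ^ s * Real.exp (-((1 + r) * t)) := by
    apply setIntegral_mono_set hint
    · filter_upwards [ae_restrict_mem measurableSet_Ioi] with t ht
      have : 0 ≤ t ^ s := Real.rpow_nonneg (le_of_lt ht) _
      simp only [Pi.zero_apply]; positivity
    · exact Ioc_subset_Ioi_self.eventuallyLE
  refine h3.trans (le_of_eq ?_)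
  rw [add_sub_cancel_right] at h1
  rw [h1, one_div, Real.inv_rpow (by linarith), ← Real.rpow_neg (by linarith)]
  rw [show -(s + 1) = -s - 1 by ring, mul_comm]

/-- A family of successive derivatives. -/
lemma family_deriv (F : ℕ → ℝ → ℂ)
    (hF : ∀ k, ∀ r > (0:ℝ), HasDerivAt (F k) (F (k + 1) r) r) :
    ContDiffOn ℝ (⊤ : ℕ∞) (F 0) (Ioi 0) ∧
    ∀ k, ∀ r > (0:ℝ), iteratedDerivWithin k (F 0) (Ioi 0) r = F k r := by
  have hd : ∀ k, ∀ r ∈ Ioi (0:ℝ), iteratedDerivWithin k (F 0) (Ioi 0) r = F k r := by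
    intro k
    induction k with
    | zero => intro r _; simp
    | succ k ih =>
      intro r hr
      rw [iteratedDerivWithin_succ, derivWithin_congr ih (ih r hr)]
      exact (hF k r hr).hasDerivWithinAt.derivWithin (uniqueDiffOn_Ioi 0 r hr)
  refine ⟨?_, hd⟩
  apply contDiffOn_of_differentiableOn_deriv
  intro m _
  refine DifferentiableOn.congr (f := F m) ?_ (hd m)
  exact fun r hr => (hF m r hr).differentiableAt.differentiableWithinAt

def Symb (m : ℝ) (f : ℝ → ℂ) : Prop :=
  ContDiffOn ℝ (⊤ : ℕ∞) f (Ioi 0) ∧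
    ∀ N : ℕ, ∃ C : ℝ, 0 ≤ C ∧ ∀ r > (0:ℝ),
      ‖iteratedDerivWithin N f (Ioi 0) r‖ ≤ C * (1 + r) ^ (m - N)

lemma Symb.mul {m m' : ℝ} {f g : ℝ → ℂ} (hf : Symb m f) (hg : Symb m' g) :
    Symb (m + m') (fun r => f r * g r) := by
  refine ⟨hf.1.mul hg.1, fun N => ?_⟩
  choose Cf hCf0 hCf using hf.2
  choose Cg hCg0 hCg using hg.2
  refine ⟨∑ i ∈ Finset.range (N + 1), (N.choose i : ℝ) * Cf i * Cg (N - i), ?_, fun r hr => ?_⟩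
  · exact Finset.sum_nonneg fun i _ => mul_nonneg (mul_nonneg (by positivity) (hCf0 i)) (hCg0 _)
  · have h := norm_iteratedFDerivWithin_mul_le hf.1 hg.1 (uniqueDiffOn_Ioi 0) (mem_Ioi.mpr hr)
      (n := N) (by exact_mod_cast le_top)
    simp only [norm_iteratedFDerivWithin_eq_norm_iteratedDerivWithin] at h
    refine h.trans ?_
    rw [Finset.sum_mul]
    apply Finset.sum_le_sum
    intro i hi
    have hi' : i ≤ N := by simpa [Nat.lt_succ_iff] using hi
    calc _ ≤ (N.choose i : ℝ) * (Cf i * (1 + r) ^ (m - i)) *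
          (Cg (N - i) * (1 + r) ^ (m' - (N - i : ℕ))) := by
            gcongr
            · exact mul_nonneg (by positivity) (mul_nonneg (hCf0 i) (by positivity))
            · exact hCf i r hr
            · exact hCg _ r hr
      _ = (N.choose i : ℝ) * Cf i * Cg (N - i) *
          ((1 + r) ^ (m - i) * (1 + r) ^ (m' - (N - i : ℕ))) := by ring
      _ = _ := by
          rw [← Real.rpow_add (by linarith), Nat.cast_sub hi']
          congr 2; ring

lemma Symb.of_family {m : ℝ} (F : ℕ → ℝ → ℂ)
    (hF : ∀ k, ∀ r > (0:ℝ), HasDerivAt (F k) (F (k + 1) r) r)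
    (hb : ∀ N : ℕ, ∃ C : ℝ, 0 ≤ C ∧ ∀ r > (0:ℝ), ‖F N r‖ ≤ C * (1 + r) ^ (m - N)) :
    Symb m (F 0) := by
  obtain ⟨h1, h2⟩ := family_deriv F hF
  refine ⟨h1, fun N => ?_⟩
  obtain ⟨C, hC, h⟩ := hb N
  exact ⟨C, hC, fun r hr => by rw [h2 N r hr]; exact h r hr⟩

lemma Symb.power (m : ℝ) : Symb m (fun r => (((1 + r) ^ m : ℝ) : ℂ)) := by
  have := Symb.of_family (m := m)
    (fun k r => (((∏ j ∈ Finset.range k, (m - j)) * (1 + r) ^ (m - k) : ℝ) : ℂ)) ?_ ?_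
  · simpa using this
  · intro k r hr
    have h : HasDerivAt (fun r : ℝ => (∏ j ∈ Finset.range k, (m - j)) * (1 + r) ^ (m - k))
      ((∏ j ∈ Finset.range (k+1), (m - j)) * (1 + r) ^ (m - (k + 1 : ℕ))) r := by
      have h1 : HasDerivAt (fun r : ℝ => 1 + r) 1 r := (hasDerivAt_id r).const_add 1
      have h2 := (h1.rpow_const (p := m - k) (Or.inl (by linarith))).const_mul
        (∏ j ∈ Finset.range k, (m - (j:ℝ)))
      refine h2.congr_deriv ?_
      rw [Finset.prod_range_succ]
      push_cast
      rw [show m - ((k:ℝ) + 1) = m - k - 1 by ring]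
      ring
    exact h.ofReal_comp
  · intro N
    refine ⟨|∏ j ∈ Finset.range N, (m - (j:ℝ))|, abs_nonneg _, fun r hr => ?_⟩
    rw [Complex.norm_real, norm_mul, Real.norm_eq_abs, Real.norm_eq_abs,
      abs_of_nonneg (a := (1 + r) ^ (m - N)) (by positivity)]

def Gk (μ : ℝ) (h : ℝ → ℂ) (k : ℕ) (r : ℝ) : ℂ :=
  ∫ t in (0:ℝ)..1, (-(t:ℂ)) ^ k * (Complex.exp (-((r:ℂ) * t)) * ((t ^ μ : ℝ) : ℂ) * h t)

lemma Gk_bound (μ : ℝ) (hμ : 0 ≤ μ) (h : ℝ → ℂ) (hc : Continuous h) (N : ℕ) :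
    ∃ C : ℝ, 0 ≤ C ∧ ∀ r > (0:ℝ), ‖Gk μ h N r‖ ≤ C * (1 + r) ^ ((-μ - 1) - N) := by
  obtain ⟨B, hB⟩ := (isCompact_Icc (a := (0:ℝ)) (b := 1)).exists_bound_of_continuousOn hc.continuousOn
  have hB0 : 0 ≤ B := (norm_nonneg _).trans (hB 0 (by simp))
  obtain ⟨C, hC, hL⟩ := laplace_bound (μ + N) (by positivity)
  refine ⟨B * C, by positivity, fun r hr => ?_⟩
  have h1 : ‖Gk μ h N r‖ ≤ ∫ t in (0:ℝ)..1, B * (t ^ (μ + N) * Real.exp (-(r * t))) := by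
    apply intervalIntegral.norm_integral_le_of_norm_le zero_le_one
    · refine Filter.Eventually.of_forall fun t ht => ?_
      have ht0 : 0 < t := ht.1
      have hh := hB t ⟨ht.1.le, ht.2⟩
      rw [norm_mul, norm_mul, norm_mul, norm_pow, norm_neg, Complex.norm_real, Complex.norm_real,
        Complex.norm_exp, Real.norm_of_nonneg ht0.le, Real.norm_of_nonneg (by positivity : 0 ≤ t ^ μ),
        Real.rpow_add ht0, Real.rpow_natCast]
      have : (-((r:ℂ) * t)).re = -(r * t) := by simp
      rw [this]
      calc t ^ N * (Real.exp (-(r * t)) * t ^ μ * ‖h t‖) ≤ t ^ N * (Real.exp (-(r * t)) * t ^ μ * B) := by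
            gcongr
        _ = _ := by ring
    · apply Continuous.intervalIntegrable
      have : Continuous (fun t : ℝ => t ^ (μ + N)) := Real.continuous_rpow_const (by positivity)
      fun_prop
  refine h1.trans ?_
  rw [intervalIntegral.integral_const_mul, mul_assoc]
  gcongr
  rw [show -μ - 1 - (N:ℝ) = -(μ + N) - 1 by ring]
  exact hL r hr

lemma Gk_deriv (μ : ℝ) (hμ : 0 ≤ μ) (h : ℝ → ℂ) (hc : Continuous h) (k : ℕ) (r : ℝ) (hr : 0 < r) :
    HasDerivAt (Gk μ h k) (Gk μ h (k + 1) r) r := by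
  have hcp : Continuous (fun t : ℝ => t ^ μ) := Real.continuous_rpow_const hμ
  have hcont : ∀ (k : ℕ) (r : ℝ), Continuous (fun t : ℝ => (-(t:ℂ)) ^ k *
      (Complex.exp (-((r:ℂ) * t)) * ((t ^ μ : ℝ) : ℂ) * h t)) := by
    intro k r
    have := Complex.continuous_ofReal.comp hcp
    simp only [Function.comp_def] at this
    fun_prop
  have := (intervalIntegral.hasDerivAt_integral_of_dominated_loc_of_deriv_le
    (𝕜 := ℝ) (μ := volume) (a := 0) (b := 1) (x₀ := r) (s := Ioi 0) (bound := fun t => ‖h t‖)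
    (F := fun (r : ℝ) t => (-(t:ℂ)) ^ k * (Complex.exp (-((r:ℂ) * t)) * ((t ^ μ : ℝ) : ℂ) * h t))
    (F' := fun (r : ℝ) t => (-(t:ℂ)) ^ (k + 1) * (Complex.exp (-((r:ℂ) * t)) * ((t ^ μ : ℝ) : ℂ) * h t))
    (Ioi_mem_nhds hr) (Filter.Eventually.of_forall fun x => (hcont k x).aestronglyMeasurable)
    ((hcont k r).intervalIntegrable _ _) (hcont (k+1) r).aestronglyMeasurable
    ?_ (hc.norm.intervalIntegrable _ _) ?_).2
  · exact this
  · refine Filter.Eventually.of_forall fun t ht x hx => ?_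
    rw [uIoc_of_le zero_le_one] at ht
    have ht0 : 0 < t := ht.1
    rw [norm_mul, norm_mul, norm_mul, norm_pow, norm_neg, Complex.norm_real, Complex.norm_real,
        Complex.norm_exp, Real.norm_of_nonneg ht0.le, Real.norm_of_nonneg (by positivity : 0 ≤ t ^ μ)]
    have h1 : (-((x:ℂ) * t)).re = -(x * t) := by simp
    rw [h1]
    have h2 : Real.exp (-(x * t)) ≤ 1 := by
      rw [Real.exp_le_one_iff]
      have := mul_pos (mem_Ioi.mp hx) ht0
      linarith
    have h3 : t ^ μ ≤ 1 := Real.rpow_le_one ht0.le ht.2 hμ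
    have h4 : t ^ (k+1) ≤ 1 := pow_le_one₀ ht0.le ht.2
    calc _ ≤ 1 * (1 * 1 * ‖h t‖) := by gcongr
      _ = _ := by ring
  · refine Filter.Eventually.of_forall fun t ht x hx => ?_
    have h1 : HasDerivAt (fun x : ℝ => -((x:ℂ) * t)) (-(1 * (t:ℂ))) x :=
      ((HasDerivAt.ofReal_comp (hasDerivAt_id x)).mul_const (t:ℂ)).neg
    have h2 := (((h1.cexp).mul_const ((t ^ μ : ℝ) : ℂ)).mul_const (h t)).const_mul ((-(t:ℂ)) ^ k)
    refine h2.congr_deriv ?_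
    ring

lemma Gk_symb (μ : ℝ) (hμ : 0 ≤ μ) (h : ℝ → ℂ) (hc : Continuous h) :
    Symb 0 (fun r => Gk μ h 0 r * (((1 + r) ^ (μ + 1) : ℝ) : ℂ)) := by
  have h1 : Symb (-μ - 1) (Gk μ h 0) :=
    Symb.of_family (Gk μ h) (fun k r hr => Gk_deriv μ hμ h hc k r hr) (Gk_bound μ hμ h hc)
  have := h1.mul (Symb.power (μ + 1))
  rwa [show -μ - 1 + (μ + 1) = 0 by ring] at this

lemma Gk_lower (μ : ℝ) (hμ : 0 ≤ μ) (h : ℝ → ℂ) (hc : Continuous h) (L : ℝ) (h0 : h 0 ≠ 0)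
    (hL : ∀ t ∈ Icc (0:ℝ) 1, ‖h t - h 0‖ ≤ L * t) :
    ∃ c > (0:ℝ), ∃ R > (0:ℝ), ∀ r, R ≤ r → c ≤ ‖Gk μ h 0 r * (((1 + r) ^ (μ + 1) : ℝ) : ℂ)‖ := by
  have hL0 : 0 ≤ L := by simpa using (norm_nonneg _).trans (hL 1 (by simp))
  have hcp : Continuous (fun t : ℝ => t ^ μ) := Real.continuous_rpow_const hμ
  have hcp1 : Continuous (fun t : ℝ => t ^ (μ + 1)) := Real.continuous_rpow_const (by linarith)
  obtain ⟨C, hC, hCb⟩ := laplace_bound (μ + 1) (by linarith)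
  set b := ‖h 0‖ with hb
  have hbpos : 0 < b := norm_pos_iff.mpr h0
  set d := Real.exp (-1) / (μ + 1) with hd
  have hdpos : 0 < d := by positivity
  refine ⟨b * d / 2, by positivity, 2 * L * C / (b * d) + 1, by positivity, fun r hr => ?_⟩
  have hr0 : 0 < r := lt_of_lt_of_le (by positivity) hr
  set P := ∫ t in (0:ℝ)..1, t ^ μ * Real.exp (-(r * t)) with hP
  -- lower bound for P
  have hPl : d * (1 + r) ^ (-μ - 1) ≤ P := by
    set e := (1 + r)⁻¹ with he
    have he0 : 0 < e := by positivity
    have he1 : e ≤ 1 := inv_le_one_of_one_le₀ (by linarith)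
    have h1 : ∫ t in (0:ℝ)..e, t ^ μ * Real.exp (-1) ≤ ∫ t in (0:ℝ)..e, t ^ μ * Real.exp (-(r * t)) := by
      apply intervalIntegral.integral_mono_on he0.le
      · apply Continuous.intervalIntegrable; fun_prop
      · apply Continuous.intervalIntegrable; fun_prop
      · intro t ht
        have : 0 ≤ t ^ μ := Real.rpow_nonneg ht.1 _
        have h2 : r * t ≤ 1 := by
          calc r * t ≤ (1 + r) * e := by
                apply mul_le_mul _ ht.2 ht.1 <;> linarith
            _ = 1 := by rw [he]; field_simp
        gcongr
    have h2 : ∫ t in (0:ℝ)..e, t ^ μ * Real.exp (-(r * t)) ≤ P := by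
      apply intervalIntegral.integral_mono_interval le_rfl he0.le he1
      · filter_upwards [ae_restrict_mem measurableSet_Ioc] with t ht
        have : 0 ≤ t ^ μ := Real.rpow_nonneg ht.1.le _
        simp only [Pi.zero_apply]; positivity
      · apply Continuous.intervalIntegrable; fun_prop
    refine le_trans (le_of_eq ?_) (h1.trans h2)
    rw [intervalIntegral.integral_mul_const, integral_rpow (Or.inl (by linarith)),
      Real.zero_rpow (by linarith), he, Real.inv_rpow (by linarith), ← Real.rpow_neg (by linarith), hd,
      show -(μ + 1) = -μ - 1 by ring]
    ring
  -- difference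
  have hdiff : ‖Gk μ h 0 r - h 0 * (P : ℂ)‖ ≤ L * (C * (1 + r) ^ (-(μ + 1) - 1)) := by
    have e1 : h 0 * (P : ℂ) =
        ∫ t in (0:ℝ)..1, Complex.exp (-((r:ℂ) * t)) * ((t ^ μ : ℝ) : ℂ) * h 0 := by
      rw [hP, ← intervalIntegral.integral_ofReal, ← intervalIntegral.integral_const_mul]
      congr 1; ext t; push_cast; ring
    have hcc := Complex.continuous_ofReal.comp hcp
    simp only [Function.comp_def] at hcc
    rw [e1, Gk, ← intervalIntegral.integral_sub
      (by apply Continuous.intervalIntegrable; fun_prop) (by apply Continuous.intervalIntegrable; fun_prop)]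
    refine le_trans ?_ (mul_le_mul_of_nonneg_left (hCb r hr0) hL0)
    rw [← intervalIntegral.integral_const_mul]
    apply intervalIntegral.norm_integral_le_of_norm_le zero_le_one
    · refine Filter.Eventually.of_forall fun t ht => ?_
      have ht0 : 0 < t := ht.1
      have hh := hL t ⟨ht.1.le, ht.2⟩
      rw [pow_zero, one_mul, ← mul_sub]
      rw [norm_mul, norm_mul, Complex.norm_real,
        Complex.norm_exp, Real.norm_of_nonneg (by positivity : 0 ≤ t ^ μ),
        Real.rpow_add ht0, Real.rpow_one]
      have : (-((r:ℂ) * t)).re = -(r * t) := by simp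
      rw [this]
      calc (Real.exp (-(r * t)) * t ^ μ * ‖h t - h 0‖) ≤ (Real.exp (-(r * t)) * t ^ μ * (L * t)) := by
            gcongr
        _ = _ := by ring
    · apply Continuous.intervalIntegrable; fun_prop
  have hP0 : 0 ≤ P := le_trans (by positivity) hPl
  have hge : b * (d * (1 + r) ^ (-μ - 1)) - L * (C * (1 + r) ^ (-(μ + 1) - 1)) ≤ ‖Gk μ h 0 r‖ := by
    have h1 : ‖h 0 * (P : ℂ)‖ = b * P := by
      rw [norm_mul, Complex.norm_real, Real.norm_of_nonneg hP0]
    have h2 := norm_sub_norm_le (h 0 * (P : ℂ)) (Gk μ h 0 r)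
    rw [norm_sub_rev, h1] at h2
    have h3 : b * (d * (1 + r) ^ (-μ - 1)) ≤ b * P := by gcongr
    linarith
  rw [norm_mul, Complex.norm_real, Real.norm_of_nonneg (by positivity)]
  have e1 : (1 + r) ^ (-μ - 1) * (1 + r) ^ (μ + 1) = 1 := by
    rw [← Real.rpow_add (by linarith)]; ring_nf; simp
  have e2 : (1 + r) ^ (-(μ + 1) - 1) * (1 + r) ^ (μ + 1) = (1 + r)⁻¹ := by
    rw [← Real.rpow_add (by linarith), ← Real.rpow_neg_one]; ring_nf
  have h5 := mul_le_mul_of_nonneg_right hge (by positivity : 0 ≤ (1 + r) ^ (μ + 1))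
  refine le_trans ?_ h5
  have e3 : (b * (d * (1 + r) ^ (-μ - 1)) - L * (C * (1 + r) ^ (-(μ + 1) - 1))) * (1 + r) ^ (μ + 1)
      = b * d * ((1 + r) ^ (-μ - 1) * (1 + r) ^ (μ + 1)) -
        L * C * ((1 + r) ^ (-(μ + 1) - 1) * (1 + r) ^ (μ + 1)) := by ring
  rw [e3, e1, e2]
  have h6 : L * C * (1 + r)⁻¹ ≤ b * d / 2 := by
    rw [← div_eq_mul_inv, div_le_iff₀ (by linarith)]
    have : 2 * L * C / (b * d) ≤ 1 + r := by linarith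
    rw [div_le_iff₀ (by positivity)] at this
    linarith
  linarith

def hp (μ : ℝ) (σ : ℂ) (t : ℝ) : ℂ := (2 + (t:ℂ) * σ) ^ (μ : ℂ)

lemma hp_slit (σ : ℂ) (hσ : σ.re = 0) (t : ℝ) : 2 + (t:ℂ) * σ ∈ Complex.slitPlane := by
  left; simp [hσ]

lemma hp_cont (μ : ℝ) (σ : ℂ) (hσ : σ.re = 0) : Continuous (hp μ σ) := by
  unfold hp
  refine Continuous.cpow (by fun_prop) continuous_const (fun t => hp_slit σ hσ t)

lemma hp_zero (μ : ℝ) (σ : ℂ) : hp μ σ 0 ≠ 0 := by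
  simp [hp, Complex.cpow_eq_zero_iff]

lemma hp_lip (μ : ℝ) (σ : ℂ) (hσ : σ.re = 0) :
    ∃ L : ℝ, ∀ t ∈ Icc (0:ℝ) 1, ‖hp μ σ t - hp μ σ 0‖ ≤ L * t := by
  have hd : ∀ t : ℝ, HasDerivAt (hp μ σ) ((μ:ℂ) * (2 + (t:ℂ) * σ) ^ ((μ:ℂ) - 1) * (1 * σ)) t := by
    intro t
    have h1 : HasDerivAt (fun z : ℂ => 2 + z * σ) (1 * σ) (t:ℂ) :=
      ((hasDerivAt_id (t:ℂ)).mul_const σ).const_add 2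
    exact (h1.cpow_const (c := (μ:ℂ)) (hp_slit σ hσ t)).comp_ofReal
  have hc : Continuous (fun t : ℝ => (μ:ℂ) * (2 + (t:ℂ) * σ) ^ ((μ:ℂ) - 1) * (1 * σ)) := by
    refine (continuous_const.mul (Continuous.cpow (by fun_prop) continuous_const
      (fun t => hp_slit σ hσ t))).mul continuous_const
  obtain ⟨B, hB⟩ := (isCompact_Icc (a := (0:ℝ)) (b := 1)).exists_bound_of_continuousOn hc.continuousOn
  refine ⟨B, fun t ht => ?_⟩
  have := (convex_Icc (0:ℝ) 1).norm_image_sub_le_of_norm_hasDerivWithin_le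
    (fun x _ => (hd x).hasDerivWithinAt) hB (left_mem_Icc.mpr zero_le_one) ht
  simpa [Real.norm_of_nonneg ht.1] using this

lemma cpow_real_mul (μ : ℝ) (σ : ℂ) (hσ : σ ≠ 0) (t : ℝ) (ht : 0 < t) :
    ((t:ℂ) * σ) ^ (μ:ℂ) = σ ^ (μ:ℂ) * ((t ^ μ : ℝ) : ℂ) := by
  have ht' : (t:ℂ) ≠ 0 := by exact_mod_cast ht.ne'
  rw [Complex.cpow_def_of_ne_zero (mul_ne_zero ht' hσ), Complex.log_ofReal_mul ht hσ,
    Complex.cpow_def_of_ne_zero hσ, Complex.ofReal_cpow ht.le, Complex.cpow_def_of_ne_zero ht',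
    ← Complex.exp_add, Complex.ofReal_log ht.le]
  ring_nf

def fcont (μ r : ℝ) (z : ℂ) : ℂ :=
  Complex.exp (Complex.I * ((r:ℂ) * z)) * ((1 - z) ^ (μ:ℂ) * (1 + z) ^ (μ:ℂ))

lemma cpow_contOn (μ : ℝ) (hμ : 0 ≤ μ) : ContinuousOn (fun z : ℂ => z ^ (μ:ℂ)) {z | 0 ≤ z.re} := by
  rcases hμ.eq_or_lt with h | h
  · subst h; simpa using continuousOn_const
  · intro z hz
    exact (Complex.continuousAt_cpow_const_of_re_pos (Or.inl hz) (by simpa using h)).continuousWithinAt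

lemma fcont_contOn (μ : ℝ) (hμ : 0 ≤ μ) (r : ℝ) :
    ContinuousOn (fcont μ r) {z | -1 ≤ z.re ∧ z.re ≤ 1} := by
  unfold fcont
  refine ContinuousOn.mul (by fun_prop) (ContinuousOn.mul ?_ ?_)
  · refine (cpow_contOn μ hμ).comp (f := fun z => 1 - z) (by fun_prop) ?_
    intro z hz; simp; exact hz.2
  · refine (cpow_contOn μ hμ).comp (f := fun z => 1 + z) (by fun_prop) ?_
    intro z hz; simp; linarith [hz.1]

def I1 (μ r : ℝ) : ℂ :=
  ∫ s in (-1:ℝ)..1, Complex.exp (Complex.I * ((r * s : ℝ) : ℂ)) * (((1 - s ^ 2) ^ μ : ℝ) : ℂ)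

lemma contour (μ : ℝ) (hμ : 0 ≤ μ) (r : ℝ) :
    I1 μ r = (∫ x in (-1:ℝ)..1, fcont μ r (x + Complex.I))
      - Complex.I * (-Complex.I) ^ (μ:ℂ) * Complex.exp (Complex.I * r) * Gk μ (hp μ Complex.I) 0 r
      + Complex.I * Complex.I ^ (μ:ℂ) * Complex.exp (-Complex.I * r) * Gk μ (hp μ (-Complex.I)) 0 r := by
  have h := Complex.integral_boundary_rect_eq_zero_of_continuousOn_of_differentiableOn
    (fcont μ r) (-1) (1 + Complex.I) ?_ ?_
  · simp only [Complex.neg_re, Complex.one_re, Complex.add_re, Complex.I_re, Complex.neg_im,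
      Complex.one_im, Complex.add_im, Complex.I_im, add_zero, neg_zero, zero_add,
      Complex.ofReal_zero, zero_mul, Complex.ofReal_one, one_mul, smul_eq_mul, Complex.ofReal_neg] at h
    have e1 : ∫ x in (-1:ℝ)..1, fcont μ r x = I1 μ r := by
      unfold I1
      apply intervalIntegral.integral_congr
      intro s hs
      rw [uIcc_of_le (by norm_num)] at hs
      have h1 : 0 ≤ 1 - s := by linarith [hs.2]
      have h2 : 0 ≤ 1 + s := by linarith [hs.1]
      simp only [fcont]
      rw [show 1 - s ^ 2 = (1 - s) * (1 + s) by ring, Real.mul_rpow h1 h2]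
      push_cast
      rw [Complex.ofReal_cpow h1, Complex.ofReal_cpow h2]
      push_cast
      rfl
    have e2 : ∫ y in (0:ℝ)..1, fcont μ r (1 + y * Complex.I) =
        (-Complex.I) ^ (μ:ℂ) * Complex.exp (Complex.I * r) * Gk μ (hp μ Complex.I) 0 r := by
      unfold Gk
      rw [← intervalIntegral.integral_const_mul]
      apply intervalIntegral.integral_congr_ae
      refine Filter.Eventually.of_forall fun t ht => ?_
      rw [uIoc_of_le zero_le_one] at ht
      have hk := cpow_real_mul μ (-Complex.I) (by simp) t ht.1
      simp only [fcont, hp, pow_zero, one_mul]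
      rw [show (1:ℂ) - (1 + t * Complex.I) = t * (-Complex.I) by ring, hk,
        show (1:ℂ) + (1 + t * Complex.I) = 2 + t * Complex.I by ring,
        show Complex.I * ((r:ℂ) * (1 + t * Complex.I)) = Complex.I * r + (-((r:ℂ) * t)) by
          linear_combination (r:ℂ) * t * Complex.I_mul_I, Complex.exp_add]
      ring
    have e3 : ∫ y in (0:ℝ)..1, fcont μ r (-1 + y * Complex.I) =
        (Complex.I) ^ (μ:ℂ) * Complex.exp (-Complex.I * r) * Gk μ (hp μ (-Complex.I)) 0 r := by
      unfold Gk
      rw [← intervalIntegral.integral_const_mul]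
      apply intervalIntegral.integral_congr_ae
      refine Filter.Eventually.of_forall fun t ht => ?_
      rw [uIoc_of_le zero_le_one] at ht
      have hk := cpow_real_mul μ (Complex.I) (by simp) t ht.1
      simp only [fcont, hp, pow_zero, one_mul]
      rw [show (1:ℂ) + (-1 + t * Complex.I) = t * (Complex.I) by ring, hk,
        show (1:ℂ) - (-1 + t * Complex.I) = 2 + t * (-Complex.I) by ring,
        show Complex.I * ((r:ℂ) * (-1 + t * Complex.I)) = -Complex.I * r + (-((r:ℂ) * t)) by
          linear_combination (r:ℂ) * t * Complex.I_mul_I, Complex.exp_add]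
      ring
    rw [e1, e2, e3] at h
    linear_combination h
  · refine (fcont_contOn μ hμ r).mono ?_
    intro z hz
    rw [Complex.mem_reProdIm] at hz
    have := hz.1
    simp only [Complex.neg_re, Complex.one_re, Complex.add_re, Complex.I_re, add_zero] at this
    rw [uIcc_of_le (by norm_num)] at this
    exact this
  · intro z hz
    rw [Complex.mem_reProdIm] at hz
    have := hz.1
    simp only [Complex.neg_re, Complex.one_re, Complex.add_re, Complex.I_re, add_zero] at this
    rw [min_eq_left (by norm_num), max_eq_right (by norm_num)] at this
    apply DifferentiableAt.differentiableWithinAt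
    unfold fcont
    have m1 : 1 - z ∈ Complex.slitPlane := by left; simp; exact this.2
    have m2 : 1 + z ∈ Complex.slitPlane := by left; simp; linarith [this.1]
    refine DifferentiableAt.mul (by fun_prop) (DifferentiableAt.mul ?_ ?_)
    · exact (by fun_prop : DifferentiableAt ℂ (fun z : ℂ => 1 - z) z).cpow_const m1
    · exact (by fun_prop : DifferentiableAt ℂ (fun z : ℂ => 1 + z) z).cpow_const m2

lemma top_bound (μ : ℝ) (hμ : 0 ≤ μ) : ∃ C : ℝ, 0 ≤ C ∧ ∀ r : ℝ,
    ‖∫ x in (-1:ℝ)..1, fcont μ r (x + Complex.I)‖ ≤ C * Real.exp (-r) := by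
  have hc : ContinuousOn (fun x : ℝ => fcont μ 0 (x + Complex.I)) (Icc (-1) 1) := by
    refine (fcont_contOn μ hμ 0).comp (f := fun x : ℝ => (x:ℂ) + Complex.I) (by fun_prop) ?_
    intro x hx
    simpa using hx
  obtain ⟨B, hB⟩ := (isCompact_Icc (a := (-1:ℝ)) (b := 1)).exists_bound_of_continuousOn hc
  have hB0 : 0 ≤ B := (norm_nonneg _).trans (hB 0 (by simp))
  refine ⟨2 * B, by positivity, fun r => ?_⟩
  have := intervalIntegral.norm_integral_le_of_norm_le_const (a := -1) (b := 1)
    (f := fun x : ℝ => fcont μ r (x + Complex.I)) (C := B * Real.exp (-r)) ?_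
  · refine this.trans (le_of_eq ?_)
    norm_num; ring
  · intro x hx
    rw [uIoc_of_le (by norm_num)] at hx
    have h1 := hB x ⟨hx.1.le, hx.2⟩
    simp only [fcont, Complex.ofReal_zero, zero_mul, mul_zero, Complex.exp_zero, one_mul] at h1
    simp only [fcont]
    rw [norm_mul, Complex.norm_exp, mul_comm]
    have : (Complex.I * ((r:ℂ) * (x + Complex.I))).re = -r := by simp
    rw [this]
    gcongr

def phi (δ u : ℝ) : ℝ := if 0 ≤ u then u ^ δ else 0

lemma phi_meas (δ : ℝ) : Measurable (phi δ) := by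
  unfold phi
  exact Measurable.ite measurableSet_Ici (measurable_id.pow_const δ) measurable_const

lemma phi_nonneg (δ u : ℝ) : 0 ≤ phi δ u := by
  unfold phi; split_ifs with h
  · exact Real.rpow_nonneg h _
  · exact le_rfl

lemma phi_integrable (n : ℕ) (δ : ℝ) (hδ : 0 ≤ δ) :
    Integrable (fun ξ : EuclideanSpace ℝ (Fin n) => phi δ (1 - ‖ξ‖ ^ 2)) := by
  have hg : Integrable ((Metric.closedBall (0 : EuclideanSpace ℝ (Fin n)) 1).indicator
      (fun _ => (1:ℝ))) := by
    rw [integrable_indicator_iff measurableSet_closedBall]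
    exact integrableOn_const (by exact (measure_closedBall_lt_top).ne)
  refine hg.mono' ((phi_meas δ).comp (by fun_prop)).aestronglyMeasurable ?_
  refine Filter.Eventually.of_forall fun ξ => ?_
  rw [Real.norm_of_nonneg (phi_nonneg _ _)]
  unfold phi
  split_ifs with h
  · have h1 : ‖ξ‖ ≤ 1 := by
      have := norm_nonneg ξ
      nlinarith
    rw [indicator_of_mem (by simpa using h1)]
    exact Real.rpow_le_one h (by nlinarith [norm_nonneg ξ]) hδ
  · exact indicator_nonneg (fun _ _ => zero_le_one) _

def J1 (m : ℕ) (δ : ℝ) : ℝ := ∫ η : EuclideanSpace ℝ (Fin m), phi δ (1 - ‖η‖ ^ 2)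

lemma J1_pos (m : ℕ) (δ : ℝ) (hδ : 0 ≤ δ) : 0 < J1 m δ := by
  unfold J1
  rw [integral_pos_iff_support_of_nonneg (fun η => phi_nonneg _ _) (phi_integrable m δ hδ)]
  refine lt_of_lt_of_le (Metric.measure_ball_pos volume (0 : EuclideanSpace ℝ (Fin m)) one_pos)
    (measure_mono ?_)
  intro η hη
  have h1 : ‖η‖ < 1 := by simpa using hη
  have h2 : 0 < 1 - ‖η‖ ^ 2 := by nlinarith [norm_nonneg η]
  simp only [Function.mem_support, phi, if_pos h2.le]
  exact (Real.rpow_pos_of_pos h2 _).ne'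

lemma J_scale (m : ℕ) (δ u : ℝ) (hu : 0 < u) :
    ∫ η : EuclideanSpace ℝ (Fin m), phi δ (u - ‖η‖ ^ 2) = u ^ (δ + m / 2) * J1 m δ := by
  have h := Measure.integral_comp_smul (volume : Measure (EuclideanSpace ℝ (Fin m)))
    (fun η => phi δ (u - ‖η‖ ^ 2)) (√u)
  have h2 : ∀ η : EuclideanSpace ℝ (Fin m), phi δ (u - ‖√u • η‖ ^ 2) =
      u ^ δ * phi δ (1 - ‖η‖ ^ 2) := by
    intro η
    rw [norm_smul, mul_pow, Real.norm_of_nonneg (Real.sqrt_nonneg _), Real.sq_sqrt hu.le,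
      show u - u * ‖η‖ ^ 2 = u * (1 - ‖η‖ ^ 2) by ring]
    unfold phi
    by_cases h : 0 ≤ 1 - ‖η‖ ^ 2
    · rw [if_pos h, if_pos (by positivity), Real.mul_rpow hu.le h]
    · rw [if_neg h, if_neg, mul_zero]
      rw [not_le] at h ⊢
      exact mul_neg_of_pos_of_neg hu h
  simp only [h2] at h
  rw [integral_const_mul, finrank_euclideanSpace_fin, smul_eq_mul, abs_of_nonneg (by positivity)] at h
  have h3 : (√u) ^ m = u ^ ((m:ℝ) / 2) := by
    rw [Real.sqrt_eq_rpow, ← Real.rpow_natCast, ← Real.rpow_mul hu.le]; ring_nf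
  rw [h3, inv_mul_eq_div, eq_div_iff (by positivity)] at h
  rw [← h, Real.rpow_add hu, J1]; ring

lemma J_neg (m : ℕ) (δ u : ℝ) (hu : u < 0) :
    ∫ η : EuclideanSpace ℝ (Fin m), phi δ (u - ‖η‖ ^ 2) = 0 := by
  have : ∀ η : EuclideanSpace ℝ (Fin m), phi δ (u - ‖η‖ ^ 2) = 0 := by
    intro η
    unfold phi
    rw [if_neg]
    nlinarith [norm_nonneg η]
  simp [this]

/-- the splitting `ℝ × ℝ^m ≃ ℝ^(m+1)` -/
def spl (m : ℕ) : ℝ × EuclideanSpace ℝ (Fin m) ≃ᵐ EuclideanSpace ℝ (Fin (m + 1)) :=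
  (((MeasurableEquiv.refl ℝ).prodCongr (MeasurableEquiv.toLp 2 (Fin m → ℝ)).symm).trans
    (MeasurableEquiv.piFinSuccAbove (fun _ : Fin (m + 1) => ℝ) 0).symm).trans
    (MeasurableEquiv.toLp 2 (Fin (m + 1) → ℝ))

lemma spl_mp (m : ℕ) : MeasurePreserving (spl m) volume volume := by
  have h1 : MeasurePreserving (MeasurableEquiv.toLp 2 (Fin (m + 1) → ℝ)) volume volume :=
    PiLp.volume_preserving_toLp (Fin (m + 1))
  have h2 := (volume_preserving_piFinSuccAbove (fun _ : Fin (m + 1) => ℝ) 0).symm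
  have h3 := (MeasurePreserving.id (volume : Measure ℝ)).prod
    (EuclideanSpace.volume_preserving_symm_measurableEquiv_toLp (Fin m))
  exact h1.comp (h2.comp h3)

lemma spl_zero (m : ℕ) (p : ℝ × EuclideanSpace ℝ (Fin m)) : (spl m p) 0 = p.1 := by
  simp [spl, MeasurableEquiv.piFinSuccAbove, MeasurableEquiv.prodCongr, MeasurableEquiv.refl]

lemma spl_succ (m : ℕ) (p : ℝ × EuclideanSpace ℝ (Fin m)) (i : Fin m) :
    (spl m p) i.succ = p.2 i := by
  simp [spl, MeasurableEquiv.piFinSuccAbove, MeasurableEquiv.prodCongr, MeasurableEquiv.refl]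

lemma spl_norm (m : ℕ) (p : ℝ × EuclideanSpace ℝ (Fin m)) :
    ‖spl m p‖ ^ 2 = p.1 ^ 2 + ‖p.2‖ ^ 2 := by
  rw [EuclideanSpace.norm_sq_eq, EuclideanSpace.norm_sq_eq, Fin.sum_univ_succ, spl_zero]
  simp [spl_succ]

lemma BR_rot (m : ℕ) (δ : ℝ) (x : EuclideanSpace ℝ (Fin (m + 1))) (hx : x ≠ 0) :
    BRker (m + 1) δ x = ∫ y : EuclideanSpace ℝ (Fin (m + 1)),
      Complex.exp (Complex.I * ((‖x‖ * y 0 : ℝ) : ℂ)) * ((phi δ (1 - ‖y‖ ^ 2) : ℝ) : ℂ) := by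
  have hx' : ‖x‖ ≠ 0 := norm_ne_zero_iff.mpr hx
  obtain ⟨b, hb⟩ := Orthonormal.exists_orthonormalBasis_extension_of_card_eq (𝕜 := ℝ)
    (E := EuclideanSpace ℝ (Fin (m + 1))) (ι := Fin (m + 1)) (by simp)
    (v := fun _ => (‖x‖)⁻¹ • x) (s := {0}) (by
      rw [orthonormal_iff_ite]
      rintro ⟨i, hi⟩ ⟨j, hj⟩
      simp only [mem_singleton_iff] at hi hj
      subst hi; subst hj
      simp [Set.domRestrict, norm_smul]
      field_simp
      exact Or.inl trivial)
  have hb0 : b 0 = (‖x‖)⁻¹ • x := hb 0 rfl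
  have hxb : x = ‖x‖ • b 0 := by rw [hb0, smul_smul, mul_inv_cancel₀ hx', one_smul]
  rw [← (b.measurePreserving_repr).integral_comp b.repr.toHomeomorph.measurableEmbedding]
  unfold BRker phi
  congr 1; ext ξ
  have h1 : ⟪x, ξ⟫ = ‖x‖ * (b.repr ξ) 0 := by
    rw [b.repr_apply_apply]
    conv_lhs => rw [hxb]
    rw [inner_smul_left]; simp
  rw [h1, b.repr.norm_map]

lemma BR_one (m : ℕ) (δ : ℝ) (hδ : 0 ≤ δ) (x : EuclideanSpace ℝ (Fin (m + 1))) (hx : x ≠ 0) :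
    BRker (m + 1) δ x = (J1 m δ : ℂ) * I1 (δ + m / 2) ‖x‖ := by
  rw [BR_rot m δ x hx]
  set r := ‖x‖
  set g : EuclideanSpace ℝ (Fin (m + 1)) → ℂ := fun y =>
    Complex.exp (Complex.I * ((r * y 0 : ℝ) : ℂ)) * ((phi δ (1 - ‖y‖ ^ 2) : ℝ) : ℂ) with hg
  have hgi : Integrable g := by
    have h1 : Integrable (fun y : EuclideanSpace ℝ (Fin (m + 1)) =>
      ((phi δ (1 - ‖y‖ ^ 2) : ℝ) : ℂ)) := (phi_integrable (m + 1) δ hδ).ofReal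
    refine h1.bdd_mul (c := 1) ?_ ?_
    · apply Continuous.aestronglyMeasurable; fun_prop
    · refine Filter.Eventually.of_forall fun y => ?_
      rw [mul_comm, Complex.norm_exp_ofReal_mul_I]
  rw [← (spl_mp m).integral_comp' g]
  have hgi2 : Integrable (fun p => g (spl m p)) :=
    ((spl_mp m).integrable_comp_emb (spl m).measurableEmbedding).mpr hgi
  rw [Measure.volume_eq_prod] at hgi2 ⊢
  rw [integral_prod _ hgi2]
  have hin : ∀ s : ℝ, ∫ η : EuclideanSpace ℝ (Fin m), g (spl m (s, η)) =
      Complex.exp (Complex.I * ((r * s : ℝ) : ℂ)) *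
      ((∫ η : EuclideanSpace ℝ (Fin m), phi δ ((1 - s ^ 2) - ‖η‖ ^ 2) : ℝ) : ℂ) := by
    intro s
    simp only [hg, spl_zero, spl_norm]
    rw [integral_const_mul, ← integral_complex_ofReal]
    simp only [sub_sub]
  simp only [hin]
  unfold I1
  rw [intervalIntegral.integral_of_le (by norm_num), ← integral_const_mul,
    ← integral_indicator measurableSet_Ioc]
  apply integral_congr_ae
  have hne : ∀ a : ℝ, ∀ᵐ s : ℝ, s ≠ a := fun a => by
    simp [ae_iff]
  filter_upwards [hne 1, hne (-1)] with s hs1 hs2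
  by_cases hs : s ∈ Ioc (-1:ℝ) 1
  · rw [indicator_of_mem hs, J_scale]
    · push_cast; ring
    · have : s < 1 := lt_of_le_of_ne hs.2 hs1
      nlinarith [hs.1]
  · rw [indicator_of_notMem hs, J_neg]
    · simp
    · rw [mem_Ioc, not_and_or, not_lt, not_le] at hs
      rcases hs with h | h
      · have := lt_of_le_of_ne h hs2
        nlinarith
      · nlinarith

lemma amp (μ : ℝ) (hμ : 0 ≤ μ) (σ : ℂ) (hσ : σ.re = 0) (κ : ℂ) (hκ : κ ≠ 0) :
    Symb 0 (fun r => κ * (Gk μ (hp μ σ) 0 r * (((1 + r) ^ (μ + 1) : ℝ) : ℂ))) ∧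
    ∃ c > (0:ℝ), ∃ R > (0:ℝ), ∀ r, R ≤ r →
      c ≤ ‖κ * (Gk μ (hp μ σ) 0 r * (((1 + r) ^ (μ + 1) : ℝ) : ℂ))‖ := by
  constructor
  · have h0 := Gk_symb μ hμ (hp μ σ) (hp_cont μ σ hσ)
    refine ⟨contDiffOn_const.mul h0.1, fun N => ?_⟩
    obtain ⟨C, hC, h⟩ := h0.2 N
    refine ⟨‖κ‖ * C, by positivity, fun r hr => ?_⟩
    rw [iteratedDerivWithin_const_mul (mem_Ioi.mpr hr) (uniqueDiffOn_Ioi 0) κ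
      ((h0.1 r hr).of_le (by exact_mod_cast le_top)), norm_mul, mul_assoc]
    gcongr
    exact h r hr
  · obtain ⟨L, hL⟩ := hp_lip μ σ hσ
    obtain ⟨c, hc, R, hR, h⟩ := Gk_lower μ hμ (hp μ σ) (hp_cont μ σ hσ) L (hp_zero μ σ) hL
    refine ⟨‖κ‖ * c, by positivity, R, hR, fun r hr => ?_⟩
    rw [norm_mul]
    gcongr
    exact h r hr

theorem stmt16 (n : ℕ) (hn : 1 ≤ n) (δ : ℝ) (hδ : 0 ≤ δ) :
    ∃ a₁ a₂ : ℝ → ℂ, ∃ C : ℝ,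
      ContDiffOn ℝ (⊤ : ℕ∞) a₁ (Set.Ioi 0) ∧ ContDiffOn ℝ (⊤ : ℕ∞) a₂ (Set.Ioi 0) ∧
      (∃ M : ℝ, ∀ r > (0 : ℝ), ‖a₁ r‖ ≤ M ∧ ‖a₂ r‖ ≤ M) ∧
      (∀ N : ℕ, ∃ CN : ℝ, ∀ r > (0 : ℝ),
        ‖iteratedDerivWithin N a₁ (Set.Ioi 0) r‖ ≤ CN * r ^ (-(N : ℝ)) ∧
        ‖iteratedDerivWithin N a₂ (Set.Ioi 0) r‖ ≤ CN * r ^ (-(N : ℝ))) ∧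
      (∃ c > (0 : ℝ), ∃ R > (0 : ℝ), ∀ r : ℝ, R ≤ r → c ≤ ‖a₁ r‖ ∧ c ≤ ‖a₂ r‖) ∧
      ∀ x : EuclideanSpace ℝ (Fin n), x ≠ 0 →
        ‖BRker n δ x -
            a₁ ‖x‖ * Complex.exp (Complex.I * (‖x‖ : ℂ)) *
              (((1 + ‖x‖) ^ (-((n : ℝ) + 1) / 2 - δ) : ℝ) : ℂ) -
            a₂ ‖x‖ * Complex.exp (-Complex.I * (‖x‖ : ℂ)) *
              (((1 + ‖x‖) ^ (-((n : ℝ) + 1) / 2 - δ) : ℝ) : ℂ)‖ ≤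
          C * (1 + ‖x‖) ^ (-(n : ℝ) - 1) := by
  obtain ⟨m, rfl⟩ : ∃ m, n = m + 1 := ⟨n - 1, by omega⟩
  set μ : ℝ := δ + m / 2 with hμd
  have hμ : 0 ≤ μ := by positivity
  have hJ := J1_pos m δ hδ
  have hJ' : (J1 m δ : ℂ) ≠ 0 := by exact_mod_cast hJ.ne'
  set κ₁ : ℂ := (J1 m δ : ℂ) * (-(Complex.I * (-Complex.I) ^ (μ:ℂ))) with hκ₁
  set κ₂ : ℂ := (J1 m δ : ℂ) * (Complex.I * Complex.I ^ (μ:ℂ)) with hκ₂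
  have hκ₁0 : κ₁ ≠ 0 := by
    simp [hκ₁, Complex.cpow_eq_zero_iff, hJ.ne']
  have hκ₂0 : κ₂ ≠ 0 := by
    simp [hκ₂, Complex.cpow_eq_zero_iff, hJ.ne']
  obtain ⟨hS1, c1, hc1, R1, hR1, hl1⟩ := amp μ hμ Complex.I (by simp) κ₁ hκ₁0
  obtain ⟨hS2, c2, hc2, R2, hR2, hl2⟩ := amp μ hμ (-Complex.I) (by simp) κ₂ hκ₂0
  obtain ⟨B, hB0, hB⟩ := top_bound μ hμ
  set a₁ : ℝ → ℂ := fun r => κ₁ * (Gk μ (hp μ Complex.I) 0 r * (((1 + r) ^ (μ + 1) : ℝ) : ℂ)) with ha₁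
  set a₂ : ℝ → ℂ := fun r => κ₂ * (Gk μ (hp μ (-Complex.I)) 0 r * (((1 + r) ^ (μ + 1) : ℝ) : ℂ)) with ha₂
  have key : ∀ N : ℕ, ∃ CN : ℝ, ∀ r > (0 : ℝ),
        ‖iteratedDerivWithin N a₁ (Set.Ioi 0) r‖ ≤ CN * r ^ (-(N : ℝ)) ∧
        ‖iteratedDerivWithin N a₂ (Set.Ioi 0) r‖ ≤ CN * r ^ (-(N : ℝ)) := by
    intro N
    obtain ⟨C1, hC1, h1⟩ := hS1.2 N
    obtain ⟨C2, hC2, h2⟩ := hS2.2 N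
    refine ⟨C1 + C2, fun r hr => ?_⟩
    have hp0 : 0 < r ^ (-(N:ℝ)) := by positivity
    have hle : (1 + r) ^ ((0:ℝ) - N) ≤ r ^ (-(N:ℝ)) := by
      rw [zero_sub]
      exact Real.rpow_le_rpow_of_nonpos hr (by linarith) (by simp)
    constructor
    · refine (h1 r hr).trans ?_
      apply mul_le_mul _ hle (by positivity) (by positivity)
      linarith
    · refine (h2 r hr).trans ?_
      apply mul_le_mul _ hle (by positivity) (by positivity)
      linarith
  refine ⟨a₁, a₂, J1 m δ * B * (Real.exp 1 * (m + 2).factorial), hS1.1, hS2.1, ?_, key, ?_, ?_⟩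
  · obtain ⟨C, hC⟩ := key 0
    refine ⟨C, fun r hr => ?_⟩
    simpa using hC r hr
  · refine ⟨min c1 c2, lt_min hc1 hc2, max R1 R2, lt_max_of_lt_left hR1, fun r hr => ⟨?_, ?_⟩⟩
    · exact (min_le_left _ _).trans (hl1 r ((le_max_left _ _).trans hr))
    · exact (min_le_right _ _).trans (hl2 r ((le_max_right _ _).trans hr))
  · intro x hx
    rw [BR_one m δ hδ x hx, ← hμd, contour μ hμ]
    have hr : 0 < ‖x‖ := norm_pos_iff.mpr hx
    set r := ‖x‖
    have e0 : -(((m + 1 : ℕ) : ℝ) + 1) / 2 - δ = -(μ + 1) := by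
      rw [hμd]; push_cast; ring
    rw [e0]
    have e1 : (((1 + r) ^ (μ + 1) : ℝ) : ℂ) * (((1 + r) ^ (-(μ + 1)) : ℝ) : ℂ) = 1 := by
      rw [← Complex.ofReal_mul, ← Real.rpow_add (by linarith)]; simp
    set E := ∫ x in (-1:ℝ)..1, fcont μ r (x + Complex.I) with hE
    have e2 : ∀ z : ℂ, z = (J1 m δ : ℂ) * E → ‖z‖ ≤
        J1 m δ * B * (Real.exp 1 * (m + 2).factorial) * (1 + r) ^ (-((m + 1 : ℕ) : ℝ) - 1) := by
      rintro z rfl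
      rw [norm_mul, Complex.norm_real, Real.norm_of_nonneg hJ.le]
      have h1 := hB r
      have h2 : Real.exp (-r) ≤
          Real.exp 1 * (m + 2).factorial * (1 + r) ^ (-((m + 1 : ℕ) : ℝ) - 1) := by
        have h3 := Real.pow_div_factorial_le_exp (1 + r) (by linarith) (m + 2)
        have h4 : (1 + r) ^ (-((m + 1 : ℕ) : ℝ) - 1) = ((1 + r) ^ (m + 2))⁻¹ := by
          rw [← Real.rpow_natCast, ← Real.rpow_neg (by linarith)]
          congr 1; push_cast; ring
        rw [h4, ← div_eq_mul_inv, le_div_iff₀ (by positivity)]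
        rw [div_le_iff₀ (by positivity), Real.exp_add] at h3
        calc Real.exp (-r) * (1 + r) ^ (m + 2)
            ≤ Real.exp (-r) * (Real.exp 1 * Real.exp r * (m + 2).factorial) := by gcongr
          _ = (Real.exp (-r) * Real.exp r) * (Real.exp 1 * (m + 2).factorial) := by ring
          _ = _ := by rw [← Real.exp_add]; simp
      calc J1 m δ * ‖E‖ ≤ J1 m δ * (B * (Real.exp 1 * (m + 2).factorial *
            (1 + r) ^ (-((m + 1 : ℕ) : ℝ) - 1))) := by
            gcongr
            exact h1.trans (by gcongr)
        _ = _ := by ring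
    apply e2
    simp only [ha₁, ha₂, hκ₁, hκ₂]
    linear_combination (
      ((J1 m δ : ℂ) * (Complex.I * (-Complex.I) ^ (μ:ℂ)) * Gk μ (hp μ Complex.I) 0 r *
        Complex.exp (Complex.I * r))
      - ((J1 m δ : ℂ) * (Complex.I * Complex.I ^ (μ:ℂ)) * Gk μ (hp μ (-Complex.I)) 0 r *
        Complex.exp (-Complex.I * r))) * e1

end
end

section
/- Fix δ ≥ 0, a symbol a of order 0, and the bump β. There exist ε₀ > 0 and, for each η ∈ C_c^∞(ℝ) supported in [π−2ε, π+2ε] with ε ∈ (0, ε₀], a constant C (depending on a, β, δ, η but not on j, ζ, r₁, r₂) such that for all j ≥ 1, all ζ ∈ ℝ and all r₁, r₂ > 0: | ∫_{π−2ε}^{π} e^{i ζ θ + i 2^j d_G(r₁,r₂;θ)} b(2^j, d_G(r₁,r₂;θ)) η(θ) dθ | ≤ C (2^j r₁ r₂)^{−1/2}, where d_G(r₁,r₂;θ) = √(r₁² + r₂² − 2 r₁ r₂ cos θ) and b(2^j, r) = β(r)(2^{−j} + r)^{−3/2−δ} a(2^j r). -/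
open MeasureTheory Real Set intervalIntegral

noncomputable section

/-- Distance between planar points with polar coordinates, as a function of
`r₁, r₂` and the angle difference. -/
def dG (r₁ r₂ θ : ℝ) : ℝ := Real.sqrt (r₁ ^ 2 + r₂ ^ 2 - 2 * r₁ * r₂ * Real.cos θ)

/-- `b(2^j, r) = β(r) (2^{-j} + r)^{-3/2-δ} a(2^j r)`. -/
def bfun (δ : ℝ) (a : ℝ → ℂ) (β : ℝ → ℝ) (j : ℕ) (r : ℝ) : ℂ :=
  ((β r : ℝ) : ℂ) * ((((2 : ℝ) ^ (-(j : ℝ)) + r) ^ (-(3 / 2 + δ)) : ℝ) : ℂ) *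
    a ((2 : ℝ) ^ (j : ℝ) * r)


lemma vdc_aux (x y : ℝ) (φ g h : ℝ → ℝ) (A A' : ℝ → ℂ) (s M K : ℝ) (hxy : x ≤ y) (hs : 0 < s)
    (hM : 0 ≤ M)
    (hφ : ∀ t ∈ Icc x y, HasDerivAt φ (g t) t)
    (hg : ∀ t ∈ Icc x y, HasDerivAt g (-h t) t)
    (hh : ∀ t ∈ Icc x y, s ^ 2 ≤ h t)
    (hA : ∀ t ∈ Icc x y, HasDerivAt A (A' t) t)
    (hAM : ∀ t ∈ Icc x y, ‖A t‖ ≤ M)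
    (hAK : ∀ t ∈ Icc x y, ‖A' t‖ ≤ K) :
    ‖∫ t in x..y, Complex.exp (Complex.I * (φ t : ℂ)) * A t‖ ≤
      (M + 2 * M * π + K * (y - x)) / s := by
  set f : ℝ → ℂ := fun t => Complex.exp (Complex.I * (φ t : ℂ)) * A t with hf
  set q : ℝ → ℝ := fun t => g t / (g t ^ 2 + s ^ 2) with hq
  have hpos : ∀ t, 0 < g t ^ 2 + s ^ 2 := fun t => by positivity
  have hE : ∀ t ∈ Icc x y, HasDerivAt (fun t => Complex.exp (Complex.I * (φ t : ℂ)))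
      (Complex.exp (Complex.I * (φ t : ℂ)) * (Complex.I * (g t : ℂ))) t := by
    intro t ht
    exact (((hφ t ht).ofReal_comp).const_mul Complex.I).cexp
  have hEn : ∀ t, ‖Complex.exp (Complex.I * (φ t : ℂ))‖ = 1 := by
    intro t
    rw [mul_comm]; exact Complex.norm_exp_ofReal_mul_I _
  have hq' : ∀ t ∈ Icc x y, HasDerivAt q
      (-h t * (s ^ 2 - g t ^ 2) / (g t ^ 2 + s ^ 2) ^ 2) t := by
    intro t ht
    have := (hg t ht).div (((hg t ht).pow 2).add_const (s ^ 2)) (hpos t).ne'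
    refine HasDerivAt.congr_deriv this ?_
    congr 1
    norm_num
    ring
  have hqn : ∀ t, |q t| ≤ 1 / (2 * s) := by
    intro t
    rw [hq]
    simp only
    rw [abs_div, abs_of_pos (hpos t), div_le_div_iff₀ (hpos t) (by positivity)]
    nlinarith [sq_nonneg (|g t| - s), sq_abs (g t)]
  have hfc : ContinuousOn f (Icc x y) := fun t ht =>
    ((hE t ht).mul (hA t ht)).continuousAt.continuousWithinAt
  have hfF : ∀ t ∈ Icc x y, HasDerivAt (fun t => f t * (q t : ℂ))
      ((Complex.exp (Complex.I * (φ t : ℂ)) * (Complex.I * (g t : ℂ)) * A t +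
        Complex.exp (Complex.I * (φ t : ℂ)) * A' t) * (q t : ℂ) +
        f t * ((-h t * (s ^ 2 - g t ^ 2) / (g t ^ 2 + s ^ 2) ^ 2 : ℝ) : ℂ)) t := by
    intro t ht
    exact ((hE t ht).mul (hA t ht)).mul (hq' t ht).ofReal_comp
  have hfn : ∀ t ∈ Icc x y, ‖f t‖ ≤ M := by
    intro t ht
    simp only [hf, norm_mul, hEn, one_mul]
    exact hAM t ht
  -- the comparison function
  set G : ℝ → ℂ := fun t => Complex.I * (∫ u in x..t, f u) - (f t * (q t : ℂ) - f x * (q x : ℂ))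
    with hG
  set B : ℝ → ℝ := fun t => 2 * M / s * (Real.arctan (g x / s) - Real.arctan (g t / s))
    + K / (2 * s) * (t - x) with hB
  have key : ‖G y‖ ≤ B y := by
    have hfi : IntervalIntegrable f volume x y :=
      (hfc.mono (by rw [uIcc_of_le hxy])).intervalIntegrable
    refine image_norm_le_of_norm_deriv_right_le_deriv_boundary' (a := x) (b := y)
      (f := G) (f' := fun t => Complex.I * f t -
        ((Complex.exp (Complex.I * (φ t : ℂ)) * (Complex.I * (g t : ℂ)) * A t +
        Complex.exp (Complex.I * (φ t : ℂ)) * A' t) * (q t : ℂ) +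
        f t * ((-h t * (s ^ 2 - g t ^ 2) / (g t ^ 2 + s ^ 2) ^ 2 : ℝ) : ℂ)))
      (B := B) (B' := fun t => 2 * M * (h t / (g t ^ 2 + s ^ 2)) + K / (2 * s))
      ?_ ?_ ?_ ?_ ?_ ?_ ⟨hxy, le_rfl⟩
    · apply ContinuousOn.sub
      · apply ContinuousOn.mul continuousOn_const
        have := continuousOn_primitive_interval' (μ := volume) hfi left_mem_uIcc
        rwa [uIcc_of_le hxy] at this
      · exact ContinuousOn.sub
          (fun t ht => (hfF t ht).continuousAt.continuousWithinAt) continuousOn_const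
    · intro t ht
      have ht' : t ∈ Icc x y := Ico_subset_Icc_self ht
      refine HasDerivWithinAt.sub ?_ (((hfF t ht').sub_const _).hasDerivWithinAt)
      apply HasDerivWithinAt.const_mul
      have hi : IntervalIntegrable f volume x t :=
        (hfc.mono (by rw [uIcc_of_le ht.1]; exact Icc_subset_Icc_right ht.2.le)).intervalIntegrable
      have hcw : ContinuousWithinAt f (Ici t) t :=
        ((hE t ht').mul (hA t ht')).continuousAt.continuousWithinAt
      refine integral_hasDerivWithinAt_right hi (s := Ici t) (t := Ioi t) ?_ (hcw.mono Ioi_subset_Ici_self)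
      refine ⟨Icc x y, ?_, hfc.aestronglyMeasurable measurableSet_Icc⟩
      exact mem_nhdsWithin.2 ⟨Iio y, isOpen_Iio, ht.2, fun u hu => ⟨ht.1.trans (le_of_lt hu.2), le_of_lt hu.1⟩⟩
    · simp [hG, hB]
    · intro t ht
      have hBd : ∀ t ∈ Icc x y, HasDerivAt B (2 * M / s * (0 - 1 / (1 + (g t / s) ^ 2) * (-h t / s))
          + K / (2 * s) * (1 - 0)) t := by
        intro t ht
        exact (((hasDerivAt_const t _).sub ((hg t ht).div_const s).arctan).const_mul _).add
          (((hasDerivAt_id t).sub (hasDerivAt_const t x)).const_mul _)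
      exact (hBd t ht).continuousAt.continuousWithinAt
    · intro t ht
      have ht' : t ∈ Icc x y := Ico_subset_Icc_self ht
      have hBd : HasDerivAt B (2 * M / s * (0 - 1 / (1 + (g t / s) ^ 2) * (-h t / s))
          + K / (2 * s) * (1 - 0)) t := 
        (((hasDerivAt_const t _).sub ((hg t ht').div_const s).arctan).const_mul _).add
          (((hasDerivAt_id t).sub (hasDerivAt_const t x)).const_mul _)
      refine HasDerivWithinAt.congr_deriv hBd.hasDerivWithinAt ?_
      have := (hpos t).ne'
      have h2 : s ^ 2 + g t ^ 2 ≠ 0 := by rw [add_comm]; exact this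
      have h3 : 1 + (g t / s) ^ 2 ≠ 0 := by positivity
      field_simp
      ring
    · intro t ht
      have ht' : t ∈ Icc x y := Ico_subset_Icc_self ht
      have hc : ((g t : ℂ)) * (q t : ℂ) = 1 - ((s ^ 2 / (g t ^ 2 + s ^ 2) : ℝ) : ℂ) := by
        rw [← Complex.ofReal_mul, ← Complex.ofReal_one, ← Complex.ofReal_sub]
        congr 1
        have := (hpos t).ne'
        simp only [hq]
        field_simp
        ring
      have e : Complex.I * f t -
        ((Complex.exp (Complex.I * (φ t : ℂ)) * (Complex.I * (g t : ℂ)) * A t +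
        Complex.exp (Complex.I * (φ t : ℂ)) * A' t) * (q t : ℂ) +
        f t * ((-h t * (s ^ 2 - g t ^ 2) / (g t ^ 2 + s ^ 2) ^ 2 : ℝ) : ℂ)) =
        Complex.I * f t * ((s ^ 2 / (g t ^ 2 + s ^ 2) : ℝ) : ℂ)
        - Complex.exp (Complex.I * (φ t : ℂ)) * A' t * (q t : ℂ)
        - f t * ((-h t * (s ^ 2 - g t ^ 2) / (g t ^ 2 + s ^ 2) ^ 2 : ℝ) : ℂ) := by
        simp only [hf]
        linear_combination (-Complex.I * Complex.exp (Complex.I * (φ t : ℂ)) * A t) * hc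
      rw [e]
      have hht := hh t ht'
      have hh0 : 0 ≤ h t := (sq_nonneg s).trans hht
      have n1 : ‖Complex.I * f t * ((s ^ 2 / (g t ^ 2 + s ^ 2) : ℝ) : ℂ)‖ ≤
          M * (h t / (g t ^ 2 + s ^ 2)) := by
        rw [norm_mul, norm_mul, Complex.norm_I, one_mul, Complex.norm_real, Real.norm_eq_abs,
          abs_of_nonneg (by positivity)]
        have := hfn t ht'
        gcongr
      have n2 : ‖Complex.exp (Complex.I * (φ t : ℂ)) * A' t * (q t : ℂ)‖ ≤ K / (2 * s) := by
        rw [norm_mul, norm_mul, hEn, one_mul, Complex.norm_real, Real.norm_eq_abs, div_eq_mul_one_div]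
        exact mul_le_mul (hAK t ht') (hqn t) (abs_nonneg _) ((norm_nonneg _).trans (hAK t ht'))
      have n3 : ‖f t * ((-h t * (s ^ 2 - g t ^ 2) / (g t ^ 2 + s ^ 2) ^ 2 : ℝ) : ℂ)‖ ≤
          M * (h t / (g t ^ 2 + s ^ 2)) := by
        rw [norm_mul, Complex.norm_real, Real.norm_eq_abs]
        refine mul_le_mul (hfn t ht') ?_ (abs_nonneg _) hM
        rw [abs_div, abs_mul, abs_neg, abs_of_nonneg hh0, abs_of_nonneg (sq_nonneg (g t ^ 2 + s ^ 2)),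
          div_le_div_iff₀ (by positivity) (hpos t)]
        have : |s ^ 2 - g t ^ 2| ≤ g t ^ 2 + s ^ 2 := by
          rw [abs_le]; constructor <;> nlinarith [sq_nonneg s, sq_nonneg (g t)]
        calc h t * |s ^ 2 - g t ^ 2| * (g t ^ 2 + s ^ 2)
            ≤ h t * (g t ^ 2 + s ^ 2) * (g t ^ 2 + s ^ 2) := by gcongr
          _ = _ := by ring
      refine (norm_sub_le _ _).trans ?_
      refine (add_le_add (norm_sub_le _ _) le_rfl).trans ?_
      linarith
  have hK : 0 ≤ K := (norm_nonneg _).trans (hAK x ⟨le_rfl, hxy⟩)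
  have hBy : B y ≤ 2 * M / s * π + K / (2 * s) * (y - x) := by
    simp only [hB]
    have h1 := Real.arctan_lt_pi_div_two (g x / s)
    have h2 := Real.neg_pi_div_two_lt_arctan (g y / s)
    have : 0 ≤ 2 * M / s := by positivity
    gcongr
    linarith
  have hb : ∀ t ∈ Icc x y, ‖f t * (q t : ℂ)‖ ≤ M * (1 / (2 * s)) := by
    intro t ht
    rw [norm_mul, Complex.norm_real, Real.norm_eq_abs]
    exact mul_le_mul (hfn t ht) (hqn t) (abs_nonneg _) hM
  have e : Complex.I * (∫ u in x..y, f u) = G y + (f y * (q y : ℂ) - f x * (q x : ℂ)) := by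
    simp only [hG]; ring
  have : ‖∫ u in x..y, f u‖ = ‖G y + (f y * (q y : ℂ) - f x * (q x : ℂ))‖ := by
    rw [← e, norm_mul, Complex.norm_I, one_mul]
  rw [this]
  have t1 := norm_add_le (G y) (f y * (q y : ℂ) - f x * (q x : ℂ))
  have t2 := norm_sub_le (f y * (q y : ℂ)) (f x * (q x : ℂ))
  have t3 := hb y ⟨hxy, le_rfl⟩
  have t4 := hb x ⟨le_rfl, hxy⟩
  have t5 : (M + 2 * M * π + K * (y - x)) / s =
    2 * (M * (1 / (2 * s))) + (2 * M / s * π + K / (2 * s) * (y - x)) + K / (2 * s) * (y - x) := by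
    field_simp; ring
  have t6 : 0 ≤ K / (2 * s) * (y - x) := mul_nonneg (by positivity) (by linarith)
  linarith

lemma bfun_bound (δ : ℝ) (hδ : 0 ≤ δ) (a : ℝ → ℂ) (ha : IsSymbol0 a)
    (β : ℝ → ℝ) (hβ : ContDiff ℝ (⊤ : ℕ∞) β)
    (hβs : Function.support β ⊆ Set.Icc (3 / 8) (4 / 3)) :
    ∃ B : ℝ, 0 ≤ B ∧ ∃ b' : ℕ → ℝ → ℂ, ∀ j r, 0 < r →
      HasDerivAt (bfun δ a β j) (b' j r) r ∧ ‖bfun δ a β j r‖ ≤ B ∧ ‖b' j r‖ ≤ B := by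
  obtain ⟨hac, ⟨M, hM⟩, haN⟩ := ha
  obtain ⟨C1, hC1⟩ := haN 1
  have hβd : Differentiable ℝ β := hβ.differentiable (by simp)
  have hβ'c : Continuous (deriv β) := hβ.continuous_deriv (by simp)
  obtain ⟨P, hP⟩ := (isCompact_Icc (a := (3 / 8 : ℝ)) (b := 4 / 3)).exists_bound_of_continuousOn
    hβ.continuous.continuousOn
  obtain ⟨Q, hQ⟩ := (isCompact_Icc (a := (3 / 8 : ℝ)) (b := 4 / 3)).exists_bound_of_continuousOn
    hβ'c.continuousOn
  have hM0 : 0 ≤ M := (norm_nonneg _).trans (hM 1 one_pos)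
  have hP0 : 0 ≤ P := (norm_nonneg _).trans (hP 1 (by norm_num))
  have hQ0 : 0 ≤ Q := (norm_nonneg _).trans (hQ 1 (by norm_num))
  have hC0 : 0 ≤ C1 := by
    have := (norm_nonneg _).trans (hC1 1 one_pos)
    simpa using this
  have hβ0 : ∀ r, r ∉ Icc (3 / 8 : ℝ) (4 / 3) → β r = 0 := fun r hr => by
    by_contra h; exact hr (hβs h)
  have hβ'0 : ∀ r, r ∉ Icc (3 / 8 : ℝ) (4 / 3) → deriv β r = 0 := fun r hr => by
    by_contra h
    exact hr (closure_minimal hβs isClosed_Icc (support_deriv_subset h))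
  set W : ℝ := (3 / 8 : ℝ) ^ (-(3 / 2 + δ)) with hW
  set V : ℝ := (3 / 8 : ℝ) ^ (-(3 / 2 + δ) - 1) with hV
  have hW0 : 0 ≤ W := by positivity
  have hV0 : 0 ≤ V := by positivity
  set b' : ℕ → ℝ → ℂ := fun j r =>
    (((deriv β r : ℝ) : ℂ) * ((((2 : ℝ) ^ (-(j : ℝ)) + r) ^ (-(3 / 2 + δ)) : ℝ) : ℂ)
      + ((β r : ℝ) : ℂ) * ((1 * (-(3 / 2 + δ)) * ((2 : ℝ) ^ (-(j : ℝ)) + r) ^ (-(3 / 2 + δ) - 1) : ℝ) : ℂ))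
      * a ((2 : ℝ) ^ (j : ℝ) * r)
      + ((β r : ℝ) : ℂ) * ((((2 : ℝ) ^ (-(j : ℝ)) + r) ^ (-(3 / 2 + δ)) : ℝ) : ℂ) *
        (((2 : ℝ) ^ (j : ℝ)) • deriv a ((2 : ℝ) ^ (j : ℝ) * r)) with hb'
  have hB0 : 0 ≤ P * W * M + ((Q * W + P * ((3 / 2 + δ) * V)) * M + P * W * (C1 * (8 / 3))) := by
    positivity
  refine ⟨P * W * M + ((Q * W + P * ((3 / 2 + δ) * V)) * M + P * W * (C1 * (8 / 3))), hB0, b', ?_⟩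
  intro j r hr
  have hl : 0 < (2 : ℝ) ^ (j : ℝ) := by positivity
  have hc : 0 < (2 : ℝ) ^ (-(j : ℝ)) := by positivity
  have hlr : 0 < (2 : ℝ) ^ (j : ℝ) * r := by positivity
  have had : HasDerivAt a (deriv a ((2 : ℝ) ^ (j : ℝ) * r)) ((2 : ℝ) ^ (j : ℝ) * r) :=
    ((hac.differentiableOn (by simp)).differentiableAt (Ioi_mem_nhds hlr)).hasDerivAt
  have hd : HasDerivAt (bfun δ a β j) (b' j r) r := by
    have h1 := (hβd r).hasDerivAt.ofReal_comp
    have h2 := (((hasDerivAt_id r).const_add ((2 : ℝ) ^ (-(j : ℝ)))).rpow_const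
      (p := -(3 / 2 + δ)) (Or.inl (by simp only [id]; positivity))).ofReal_comp
    have h3 : HasDerivAt (fun r => a ((2 : ℝ) ^ (j : ℝ) * r))
        (((2 : ℝ) ^ (j : ℝ)) • deriv a ((2 : ℝ) ^ (j : ℝ) * r)) r := by
      have := (hasDerivAt_id r).const_mul ((2 : ℝ) ^ (j : ℝ))
      have h4 := HasDerivAt.scomp r had this
      exact h4.congr_deriv (by rw [mul_one])
    exact (h1.mul h2).mul h3
  refine ⟨hd, ?_⟩
  by_cases hr' : r ∈ Icc (3 / 8 : ℝ) (4 / 3)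
  · have w : ‖((((2 : ℝ) ^ (-(j : ℝ)) + r) ^ (-(3 / 2 + δ)) : ℝ) : ℂ)‖ ≤ W := by
      rw [Complex.norm_real, Real.norm_eq_abs, abs_of_nonneg (by positivity)]
      exact Real.rpow_le_rpow_of_nonpos (by norm_num) (by linarith [hr'.1]) (by linarith)
    have v : ‖((1 * (-(3 / 2 + δ)) * ((2 : ℝ) ^ (-(j : ℝ)) + r) ^ (-(3 / 2 + δ) - 1) : ℝ) : ℂ)‖
        ≤ (3 / 2 + δ) * V := by
      rw [Complex.norm_real, norm_mul, Real.norm_eq_abs, Real.norm_eq_abs, one_mul, abs_neg,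
        abs_of_nonneg (by positivity), abs_of_nonneg (by positivity)]
      gcongr
      exact Real.rpow_le_rpow_of_nonpos (by norm_num) (by linarith [hr'.1]) (by linarith)
    have p : ‖((β r : ℝ) : ℂ)‖ ≤ P := by rw [Complex.norm_real]; exact hP r hr'
    have q : ‖((deriv β r : ℝ) : ℂ)‖ ≤ Q := by rw [Complex.norm_real]; exact hQ r hr'
    have m := hM _ hlr
    have c : ‖((2 : ℝ) ^ (j : ℝ)) • deriv a ((2 : ℝ) ^ (j : ℝ) * r)‖ ≤ C1 * (8 / 3) := by
      have := hC1 _ hlr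
      rw [iteratedDerivWithin_one, derivWithin_of_isOpen isOpen_Ioi hlr] at this
      rw [norm_smul, Real.norm_eq_abs, abs_of_pos hl]
      calc (2 : ℝ) ^ (j : ℝ) * ‖deriv a ((2 : ℝ) ^ (j : ℝ) * r)‖
          ≤ (2 : ℝ) ^ (j : ℝ) * (C1 * ((2 : ℝ) ^ (j : ℝ) * r) ^ (-((1 : ℕ) : ℝ))) := by gcongr
        _ = C1 * (1 / r) := by
          rw [Nat.cast_one, Real.rpow_neg_one]; field_simp
        _ ≤ C1 * (8 / 3) := by
          refine mul_le_mul_of_nonneg_left ?_ hC0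
          rw [div_le_iff₀ hr]; linarith [hr'.1]
    have X : ‖bfun δ a β j r‖ ≤ P * W * M := by
      rw [bfun, norm_mul, norm_mul]; gcongr
    have Y : ‖b' j r‖ ≤ (Q * W + P * ((3 / 2 + δ) * V)) * M + P * W * (C1 * (8 / 3)) := by
      simp only [hb']
      refine (norm_add_le _ _).trans (add_le_add ?_ ?_)
      · rw [norm_mul]
        refine mul_le_mul ((norm_add_le _ _).trans (add_le_add ?_ ?_)) m (norm_nonneg _) (by positivity)
        · rw [norm_mul]; gcongr
        · rw [norm_mul]; gcongr
      · rw [norm_mul, norm_mul]; gcongr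
    have X0 : 0 ≤ P * W * M := by positivity
    have Y0 := (norm_nonneg _).trans Y
    constructor <;> linarith
  · constructor
    · rw [bfun, hβ0 r hr']; simpa using hB0
    · simp only [hb', hβ0 r hr', hβ'0 r hr']; simpa using hB0

theorem stmt18 (δ : ℝ) (hδ : 0 ≤ δ) (a : ℝ → ℂ) (ha : IsSymbol0 a)
    (β : ℝ → ℝ) (hβ : ContDiff ℝ (⊤ : ℕ∞) β)
    (hβs : Function.support β ⊆ Set.Icc (3 / 8) (4 / 3)) :
    ∃ ε₀ : ℝ, 0 < ε₀ ∧ ∀ ε : ℝ, 0 < ε → ε ≤ ε₀ →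
      ∀ η : ℝ → ℝ, ContDiff ℝ (⊤ : ℕ∞) η →
        Function.support η ⊆ Set.Icc (Real.pi - 2 * ε) (Real.pi + 2 * ε) →
        ∃ C : ℝ, ∀ (j : ℕ), 1 ≤ j → ∀ ζ r₁ r₂ : ℝ, 0 < r₁ → 0 < r₂ →
          ‖∫ θ in (Real.pi - 2 * ε)..Real.pi,
              Complex.exp (Complex.I *
                ((ζ * θ + (2 : ℝ) ^ (j : ℝ) * dG r₁ r₂ θ : ℝ) : ℂ)) *
                bfun δ a β j (dG r₁ r₂ θ) * ((η θ : ℝ) : ℂ)‖ ≤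
            C * ((2 : ℝ) ^ (j : ℝ) * r₁ * r₂) ^ (-(1 : ℝ) / 2) := by
  obtain ⟨B, hB0, b', hb⟩ := bfun_bound δ hδ a ha β hβ hβs
  refine ⟨1 / 2, by norm_num, ?_⟩
  intro ε hε hε1 η hη _
  obtain ⟨P, hP⟩ := (isCompact_Icc (a := π - 2 * ε) (b := π)).exists_bound_of_continuousOn
    hη.continuous.continuousOn
  obtain ⟨Q, hQ⟩ := (isCompact_Icc (a := π - 2 * ε) (b := π)).exists_bound_of_continuousOn
    (hη.continuous_deriv (by simp)).continuousOn
  have hxy : π - 2 * ε ≤ π := by linarith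
  have hP0 : 0 ≤ P := (norm_nonneg _).trans (hP π ⟨hxy, le_rfl⟩)
  have hQ0 : 0 ≤ Q := (norm_nonneg _).trans (hQ π ⟨hxy, le_rfl⟩)
  have hC0 : 0 ≤ 2 * (B * P + 2 * (B * P) * π + (2 * B * P + B * Q) * (π - (π - 2 * ε))) := by
    have : 0 ≤ π - (π - 2 * ε) := by linarith
    have := Real.pi_pos
    positivity
  refine ⟨2 * (B * P + 2 * (B * P) * π + (2 * B * P + B * Q) * (π - (π - 2 * ε))), ?_⟩
  intro j _ ζ r₁ r₂ h1 h2
  set L : ℝ := (2 : ℝ) ^ (j : ℝ) with hL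
  have hLpos : 0 < L := by positivity
  have hcos : ∀ t ∈ Icc (π - 2 * ε) π, Real.cos t ≤ -(1 / 2) := by
    intro t ht
    have h3 := Real.pi_gt_three
    have : Real.cos (π / 3) ≤ Real.cos (π - t) :=
      Real.cos_le_cos_of_nonneg_of_le_pi (by linarith [ht.2]) (by linarith) (by linarith [ht.1])
    rw [Real.cos_pi_div_three, Real.cos_pi_sub] at this
    linarith
  have hr12 : 0 < r₁ * r₂ := by positivity
  have hin : ∀ t ∈ Icc (π - 2 * ε) π,
      r₁ ^ 2 + r₂ ^ 2 ≤ r₁ ^ 2 + r₂ ^ 2 - 2 * r₁ * r₂ * Real.cos t := by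
    intro t ht
    nlinarith [hcos t ht]
  have hrr : 0 < r₁ ^ 2 + r₂ ^ 2 := by positivity
  have hdpos : ∀ t ∈ Icc (π - 2 * ε) π, 0 < dG r₁ r₂ t := by
    intro t ht
    exact Real.sqrt_pos.2 (hrr.trans_le (hin t ht))
  have hdsq : ∀ t ∈ Icc (π - 2 * ε) π,
      dG r₁ r₂ t ^ 2 = r₁ ^ 2 + r₂ ^ 2 - 2 * r₁ * r₂ * Real.cos t := by
    intro t ht
    exact Real.sq_sqrt (hrr.le.trans (hin t ht))
  by_cases hex : ∃ t ∈ Icc (π - 2 * ε) π, dG r₁ r₂ t ≤ 4 / 3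
  swap
  · push Not at hex
    rw [integral_congr (g := fun _ => (0 : ℂ))]
    · simp only [intervalIntegral.integral_zero, norm_zero]
      exact mul_nonneg hC0 (by positivity)
    · intro t ht
      rw [uIcc_of_le hxy] at ht
      have : β (dG r₁ r₂ t) = 0 := by
        by_contra h
        exact absurd (hβs h).2 (not_le.2 (hex t ht))
      simp [bfun, this]
  obtain ⟨t0, ht0, hdt0⟩ := hex
  have hrr2 : r₁ ^ 2 + r₂ ^ 2 ≤ 16 / 9 := by
    have := hdsq t0 ht0
    have := hin t0 ht0
    have := hdpos t0 ht0
    nlinarith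
  have hd2 : ∀ t ∈ Icc (π - 2 * ε) π, dG r₁ r₂ t ≤ 2 := by
    intro t ht
    have h3 := hdsq t ht
    have h4 := Real.neg_one_le_cos t
    have : dG r₁ r₂ t ^ 2 ≤ 4 := by nlinarith [sq_nonneg (r₁ - r₂)]
    nlinarith [hdpos t ht]
  have hdd : ∀ t ∈ Icc (π - 2 * ε) π,
      HasDerivAt (dG r₁ r₂) (r₁ * r₂ * Real.sin t / dG r₁ r₂ t) t := by
    intro t ht
    have h3 := (((Real.hasDerivAt_cos t).const_mul (2 * r₁ * r₂)).const_sub (r₁ ^ 2 + r₂ ^ 2)).sqrt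
      (hrr.trans_le (hin t ht)).ne'
    have h4 := (hdpos t ht).ne'
    refine HasDerivAt.congr_deriv h3 ?_
    change _ / (2 * dG r₁ r₂ t) = _
    field_simp
  set s : ℝ := Real.sqrt (L * r₁ * r₂) / 2 with hs
  have hLr : 0 < L * r₁ * r₂ := by positivity
  have hspos : 0 < s := by positivity
  have hss : s ^ 2 = L * r₁ * r₂ / 4 := by
    rw [hs, div_pow, Real.sq_sqrt hLr.le]; norm_num
  have main := vdc_aux (π - 2 * ε) π (fun t => ζ * t + L * dG r₁ r₂ t)
    (fun t => ζ + L * (r₁ * r₂ * Real.sin t / dG r₁ r₂ t))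
    (fun t => -(L * ((r₁ * r₂ * Real.cos t * dG r₁ r₂ t -
      r₁ * r₂ * Real.sin t * (r₁ * r₂ * Real.sin t / dG r₁ r₂ t)) / dG r₁ r₂ t ^ 2)))
    (fun t => bfun δ a β j (dG r₁ r₂ t) * ((η t : ℝ) : ℂ))
    (fun t => ((r₁ * r₂ * Real.sin t / dG r₁ r₂ t) • b' j (dG r₁ r₂ t)) * ((η t : ℝ) : ℂ)
      + bfun δ a β j (dG r₁ r₂ t) * ((deriv η t : ℝ) : ℂ))
    s (B * P) (2 * B * P + B * Q) hxy hspos (by positivity) ?_ ?_ ?_ ?_ ?_ ?_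
  · have e : 2 * (B * P + 2 * (B * P) * π + (2 * B * P + B * Q) * (π - (π - 2 * ε))) *
        (L * r₁ * r₂) ^ (-(1 : ℝ) / 2) =
        (B * P + 2 * (B * P) * π + (2 * B * P + B * Q) * (π - (π - 2 * ε))) / s := by
      have : (L * r₁ * r₂) ^ (-(1 : ℝ) / 2) = (Real.sqrt (L * r₁ * r₂))⁻¹ := by
        rw [Real.sqrt_eq_rpow, ← Real.rpow_neg hLr.le]; norm_num
      rw [this, hs]
      field_simp
    rw [e]
    refine le_trans (le_of_eq ?_) main
    congr 2
    ext t
    ring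
  · intro t ht
    exact (((hasDerivAt_id t).const_mul ζ).add ((hdd t ht).const_mul L)).congr_deriv (by rw [mul_one])
  · intro t ht
    rw [neg_neg]
    exact ((((Real.hasDerivAt_sin t).const_mul (r₁ * r₂)).div (hdd t ht)
      (hdpos t ht).ne').const_mul L).const_add ζ
  · intro t ht
    rw [hss]
    have h3 := hdpos t ht
    have h4 := hd2 t ht
    have h5 := hcos t ht
    have e : -(L * ((r₁ * r₂ * Real.cos t * dG r₁ r₂ t -
      r₁ * r₂ * Real.sin t * (r₁ * r₂ * Real.sin t / dG r₁ r₂ t)) / dG r₁ r₂ t ^ 2)) =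
      L * (r₁ * r₂) * (-Real.cos t / dG r₁ r₂ t) +
        L * ((r₁ * r₂ * Real.sin t) ^ 2 / dG r₁ r₂ t ^ 3) := by
      field_simp
      ring
    simp only [e]
    have h6 : 1 / 4 ≤ -Real.cos t / dG r₁ r₂ t := by
      rw [div_le_div_iff₀ (by norm_num) h3]; linarith
    have h7 : 0 ≤ L * ((r₁ * r₂ * Real.sin t) ^ 2 / dG r₁ r₂ t ^ 3) := by positivity
    have h8 : L * (r₁ * r₂) * (1 / 4) ≤ L * (r₁ * r₂) * (-Real.cos t / dG r₁ r₂ t) := by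
      gcongr
    linarith
  · intro t ht
    exact (HasDerivAt.scomp t (hb j _ (hdpos t ht)).1 (hdd t ht)).mul
      ((hη.differentiable (by simp) t).hasDerivAt.ofReal_comp)
  · intro t ht
    rw [norm_mul, Complex.norm_real]
    exact mul_le_mul (hb j _ (hdpos t ht)).2.1 (hP t ht) (norm_nonneg _) hB0
  · intro t ht
    have h3 := hdpos t ht
    have h4 := hd2 t ht
    obtain ⟨-, g1, g2⟩ := hb j _ h3
    have g3 := hP t ht
    have g4 := hQ t ht
    have h5 : |r₁ * r₂ * Real.sin t / dG r₁ r₂ t| ≤ 2 := by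
      rw [abs_div, abs_mul, abs_of_pos hr12, abs_of_pos h3, div_le_iff₀ h3]
      have h6 := Real.abs_sin_le_one t
      have h7 : r₁ * r₂ * |Real.sin t| ≤ r₁ * r₂ * 1 := by gcongr
      have h8 := hdsq t ht
      have h9 := hin t ht
      nlinarith [sq_nonneg (r₁ - r₂)]
    refine (norm_add_le _ _).trans (add_le_add ?_ ?_)
    · rw [norm_mul, norm_smul, Complex.norm_real, Real.norm_eq_abs]
      gcongr
    · rw [norm_mul, Complex.norm_real]
      gcongr

end
end
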